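/- arXiv:1901.01993 — 4 statements merged into one kernel-verified Lean document; each statement's English description precedes it below -/
import Mathlib

section
/- Let M ≥ 5 be an integer and let a, b be integers with 1 ≤ a < b < M/2 and gcd(a,M) = gcd(b,M) = 1. Then for every integer n ≥ 1 and every integer m with 1 ≤ m ≤ Mn, the number of partitions of Mn into exactly m parts, each part congruent to a or M−a modulo M, is greater than or equal to the number of partitions of Mn into exactly m parts, each part congruent to b or M−b modulo M. (This is part (i) of the main theorem, equivalently Corollary 1(i): the coefficient c(m, Mn) in the two-variable expansion of 1/(sq^a, sq^{M−a}; q^M)_∞ − 1/(sq^b, sq^{M−b}; q^M)_∞ is nonnegative.) -/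
/-!
Dividing the parts of a partition by `M` splits a partition into `j` parts `≡ a` and `k` parts
`≡ -a` modulo `M` into a pair of multisets of natural numbers, of cardinalities `j` and `k`. The
multisets of cardinality `j` have the generating function `C_j = ∏_{1 ≤ i ≤ j} (1 - X ^ i)⁻¹` with
respect to their sum. Hence the partitions of `M * n` with `k + d` parts in one of the two residue
classes and `k` in the other are counted by the coefficient of `X ^ n` in
`X ^ k * (X ^ α + X ^ (d - α)) * C_{k + d} * C_k` if `α = a * d / M` is an integer, and there are
none otherwise. For `a < b < M / 2` and `β = b * d / M`, the difference
`X ^ α + X ^ (d - α) - X ^ β - X ^ (d - β)` is `X ^ α * (1 - X ^ (β - α)) * (1 - X ^ (d - α - β))`.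
Its last two factors cancel against two different factors of the denominator of `C_{k + d}`, so
the product has nonnegative coefficients.
-/

section

open Finset PowerSeries

section NonnegCoeffs

variable {R : Type*}

/-- A power series all of whose coefficients are nonnegative. The comparison of two counting
functions is reduced to this property of the difference of their generating functions. -/
def HasNonnegCoeffs [Semiring R] [LE R] (F : R⟦X⟧) : Prop :=
  ∀ N, 0 ≤ coeff N F

section Semiring

variable [Semiring R] [PartialOrder R] [IsOrderedRing R]

theorem HasNonnegCoeffs.mul {F G : R⟦X⟧} (hF : HasNonnegCoeffs F) (hG : HasNonnegCoeffs G) :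
    HasNonnegCoeffs (F * G) := fun N => by
  rw [coeff_mul]
  exact sum_nonneg fun x _ => mul_nonneg (hF x.1) (hG x.2)

theorem hasNonnegCoeffs_X_pow (k : ℕ) : HasNonnegCoeffs (X ^ k : R⟦X⟧) := fun N => by
  rw [coeff_X_pow]
  split_ifs <;> simp

end Semiring

section CommRing

variable [CommRing R] [PartialOrder R] [IsOrderedAddMonoid R]

theorem HasNonnegCoeffs.of_mul_one_sub_X_pow {F : R⟦X⟧} {i : ℕ} (hi : 0 < i)
    (hF : HasNonnegCoeffs (F * (1 - X ^ i))) : HasNonnegCoeffs F := fun N => by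
  induction N using Nat.strong_induction_on with
  | _ N ih =>
    have hN := hF N
    rw [mul_sub, mul_one, map_sub, coeff_mul_X_pow', sub_nonneg] at hN
    refine le_trans ?_ hN
    split_ifs with hiN
    · exact ih (N - i) (by omega)
    · exact le_rfl

theorem HasNonnegCoeffs.of_mul_prod_one_sub_X_pow {F : R⟦X⟧} {S : Finset ℕ}
    (hS : ∀ i ∈ S, 0 < i) (hF : HasNonnegCoeffs (F * ∏ i ∈ S, (1 - X ^ i))) :
    HasNonnegCoeffs F := by
  induction S using Finset.induction_on with
  | empty => simpa using hF
  | insert i S hiS ih =>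
    rw [prod_insert hiS, mul_left_comm, mul_comm] at hF
    exact ih (fun x hx => hS x (mem_insert_of_mem hx))
      (hF.of_mul_one_sub_X_pow (hS i (mem_insert_self i S)))

end CommRing

end NonnegCoeffs

/-- The multisets of `j` natural numbers, zero allowed, with sum `N`; equivalently, the partitions
of `N` into at most `j` parts. Drawing the numbers from `range (N + 1)` is no restriction. -/
def multisetsOfCardSum (j N : ℕ) : Finset (Multiset ℕ) :=
  (((range (N + 1)).sym j).image Sym.toMultiset).filter (fun u => u.sum = N)

theorem mem_multisetsOfCardSum {j N : ℕ} {u : Multiset ℕ} :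
    u ∈ multisetsOfCardSum j N ↔ u.card = j ∧ u.sum = N := by
  simp only [multisetsOfCardSum, mem_filter, mem_image, mem_sym_iff, mem_range, Nat.lt_succ_iff]
  constructor
  · rintro ⟨⟨s, -, rfl⟩, hsum⟩
    exact ⟨s.2, hsum⟩
  · rintro ⟨hcard, rfl⟩
    exact ⟨⟨⟨u, hcard⟩, fun x hx => Multiset.le_sum_of_mem hx, rfl⟩, rfl⟩

theorem card_filter_zero_mem_multisetsOfCardSum (j N : ℕ) :
    #{u ∈ multisetsOfCardSum (j + 1) N | 0 ∈ u} = #(multisetsOfCardSum j N) := by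
  have cons_injective : Function.Injective (Multiset.cons 0 : Multiset ℕ → Multiset ℕ) :=
    fun _ _ => (Multiset.cons_inj_right 0).1
  rw [← card_image_of_injective (multisetsOfCardSum j N) cons_injective]
  congr 1
  ext u
  simp only [mem_filter, mem_image, mem_multisetsOfCardSum]
  constructor
  · rintro ⟨⟨hcard, hsum⟩, h0⟩
    obtain ⟨v, rfl⟩ := Multiset.exists_cons_of_mem h0
    exact ⟨v, by simpa using And.intro hcard hsum, rfl⟩
  · rintro ⟨v, ⟨rfl, rfl⟩, rfl⟩
    simp

theorem multiset_sum_map_add_one (u : Multiset ℕ) : (u.map (· + 1)).sum = u.sum + u.card := by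
  simp

theorem exists_multiset_map_add_one_eq {u : Multiset ℕ} (h0 : 0 ∉ u) :
    ∃ v : Multiset ℕ, v.map (· + 1) = u := by
  refine ⟨u.map (· - 1), ?_⟩
  rw [Multiset.map_map]
  refine (Multiset.map_congr rfl fun x hx => ?_).trans u.map_id
  exact Nat.sub_add_cancel (Nat.pos_of_ne_zero fun hx0 => h0 (hx0 ▸ hx))

theorem card_filter_zero_notMem_multisetsOfCardSum (j N : ℕ) :
    #{u ∈ multisetsOfCardSum j (N + j) | 0 ∉ u} = #(multisetsOfCardSum j N) := by
  rw [← card_image_of_injective (multisetsOfCardSum j N)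
    (Multiset.map_injective (add_left_injective 1))]
  congr 1
  ext u
  simp only [mem_filter, mem_image, mem_multisetsOfCardSum]
  constructor
  · rintro ⟨⟨hcard, hsum⟩, h0⟩
    obtain ⟨v, rfl⟩ := exists_multiset_map_add_one_eq h0
    rw [Multiset.card_map] at hcard
    rw [multiset_sum_map_add_one, hcard, Nat.add_right_cancel_iff] at hsum
    exact ⟨v, ⟨hcard, hsum⟩, rfl⟩
  · rintro ⟨v, ⟨rfl, rfl⟩, rfl⟩
    simp

theorem filter_zero_notMem_multisetsOfCardSum_eq_empty {j N : ℕ} (hN : N < j) :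
    {u ∈ multisetsOfCardSum j N | 0 ∉ u} = ∅ := by
  refine filter_eq_empty_iff.2 fun u hu h0 => ?_
  obtain ⟨hcard, hsum⟩ := mem_multisetsOfCardSum.1 hu
  obtain ⟨v, rfl⟩ := exists_multiset_map_add_one_eq h0
  rw [Multiset.card_map] at hcard
  rw [multiset_sum_map_add_one] at hsum
  omega

/-- The generating function, by sum, of the multisets of `j` natural numbers. It is the series
`C_j = ∏_{1 ≤ i ≤ j} (1 - X ^ i)⁻¹`, see `multisetSeries_mul_prod`. -/
noncomputable def multisetSeries (j : ℕ) : ℤ⟦X⟧ :=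
  PowerSeries.mk fun N => (#(multisetsOfCardSum j N) : ℤ)

theorem multisetSeries_zero : multisetSeries 0 = 1 := by
  have eq_ite : ∀ N, multisetsOfCardSum 0 N = if N = 0 then {0} else ∅ := fun N => by
    ext u
    rw [mem_multisetsOfCardSum, Multiset.card_eq_zero]
    split_ifs with hN
    · subst hN
      simpa using fun hu : u = 0 => hu ▸ Multiset.sum_zero
    · simpa using fun hu : u = 0 => hu ▸ Ne.symm hN
  ext N
  rw [multisetSeries, coeff_mk, coeff_one, eq_ite]
  split_ifs <;> simp

-- A multiset of `j + 1` naturals contains `0`, or all its elements can be decreased by `1`.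
theorem multisetSeries_succ_mul (j : ℕ) :
    multisetSeries (j + 1) * (1 - X ^ (j + 1)) = multisetSeries j := by
  ext N
  rw [mul_sub, mul_one, map_sub, coeff_mul_X_pow']
  simp only [multisetSeries, coeff_mk]
  have split := card_filter_add_card_filter_not (s := multisetsOfCardSum (j + 1) N) (0 ∈ ·)
  rw [card_filter_zero_mem_multisetsOfCardSum] at split
  split_ifs with hN
  · obtain ⟨K, rfl⟩ := Nat.exists_eq_add_of_le' hN
    rw [card_filter_zero_notMem_multisetsOfCardSum] at split
    rw [Nat.add_sub_cancel]
    omega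
  · rw [filter_zero_notMem_multisetsOfCardSum_eq_empty (by omega), card_empty] at split
    omega

theorem multisetSeries_mul_prod (j : ℕ) :
    multisetSeries j * ∏ i ∈ Icc 1 j, (1 - X ^ i) = 1 := by
  induction j with
  | zero => simp [multisetSeries_zero]
  | succ j ih =>
    rw [prod_Icc_succ_top (by omega), mul_left_comm, multisetSeries_succ_mul, mul_comm, ih]

theorem hasNonnegCoeffs_multisetSeries_mul_prod {j : ℕ} {S : Finset ℕ} (hS : S ⊆ Icc 1 j) :
    HasNonnegCoeffs (multisetSeries j * ∏ i ∈ S, (1 - X ^ i)) := by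
  refine HasNonnegCoeffs.of_mul_prod_one_sub_X_pow (S := Icc 1 j \ S)
    (fun i hi => (mem_Icc.1 (mem_sdiff.1 hi).1).1) ?_
  rw [mul_assoc, mul_comm (∏ i ∈ S, _), prod_sdiff hS, multisetSeries_mul_prod]
  exact hasNonnegCoeffs_X_pow 0

theorem hasNonnegCoeffs_multisetSeries (j : ℕ) : HasNonnegCoeffs (multisetSeries j) := by
  simpa using hasNonnegCoeffs_multisetSeries_mul_prod (empty_subset (Icc 1 j))

theorem hasNonnegCoeffs_multisetSeries_mul_sub {j α β β' α' : ℕ} (hsum : α + α' = β + β')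
    (hαβ : α < β) (hββ' : β < β') (hβ' : β' ≤ α + j) :
    HasNonnegCoeffs (multisetSeries j * (X ^ α + X ^ α' - (X ^ β + X ^ β'))) := by
  obtain ⟨s, rfl⟩ := Nat.exists_eq_add_of_le hαβ.le
  obtain ⟨t, rfl⟩ := Nat.exists_eq_add_of_le (hαβ.trans hββ').le
  obtain rfl : α' = α + s + t := by omega
  have hsubset : {s, t} ⊆ Icc 1 j := by
    intro i hi
    simp only [mem_insert, mem_singleton] at hi
    rw [mem_Icc]
    omega
  have factor : multisetSeries j * (X ^ α + X ^ (α + s + t) - (X ^ (α + s) + X ^ (α + t))) =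
      X ^ α * (multisetSeries j * ∏ i ∈ {s, t}, (1 - X ^ i)) := by
    rw [prod_pair (by omega)]
    ring
  rw [factor]
  exact (hasNonnegCoeffs_X_pow α).mul (hasNonnegCoeffs_multisetSeries_mul_prod hsubset)

/-- The pairs of multisets of `j` and of `k` natural numbers with total sum `N`. -/
def multisetPairsOfCardSum (j k N : ℕ) : Finset (Multiset ℕ × Multiset ℕ) :=
  (antidiagonal N).biUnion fun x => multisetsOfCardSum j x.1 ×ˢ multisetsOfCardSum k x.2

theorem mem_multisetPairsOfCardSum {j k N : ℕ} {u v : Multiset ℕ} :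
    (u, v) ∈ multisetPairsOfCardSum j k N ↔ u.card = j ∧ v.card = k ∧ u.sum + v.sum = N := by
  simp only [multisetPairsOfCardSum, mem_biUnion, HasAntidiagonal.mem_antidiagonal, mem_product,
    mem_multisetsOfCardSum, Prod.exists]
  constructor
  · rintro ⟨x, y, rfl, ⟨hu, rfl⟩, hv, rfl⟩
    exact ⟨hu, hv, rfl⟩
  · rintro ⟨hu, hv, hsum⟩
    exact ⟨u.sum, v.sum, hsum, ⟨hu, rfl⟩, hv, rfl⟩

theorem coeff_multisetSeries_mul (j k N : ℕ) :
    coeff N (multisetSeries j * multisetSeries k) = #(multisetPairsOfCardSum j k N) := by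
  rw [multisetPairsOfCardSum, card_biUnion]
  · simp [coeff_mul, multisetSeries]
  · intro x _ y _ hxy
    refine disjoint_left.2 fun ⟨u, v⟩ hx hy => hxy ?_
    simp only [mem_product, mem_multisetsOfCardSum] at hx hy
    exact Prod.ext (hx.1.2.symm.trans hy.1.2) (hx.2.2.symm.trans hy.2.2)

section Residues

variable {M r s : ℕ}

/-- The quotients by `M` of those elements of `p` that leave the remainder `r`. -/
def residueQuotients (M r : ℕ) (p : Multiset ℕ) : Multiset ℕ :=
  (p.filter (· % M = r)).map (· / M)

/-- The multiset of numbers `≡ r` modulo `M` with given quotients: the inverse operation to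
`residueQuotients M r`. -/
def residueLift (M r : ℕ) (u : Multiset ℕ) : Multiset ℕ :=
  u.map (M * · + r)

theorem card_residueQuotients (p : Multiset ℕ) :
    (residueQuotients M r p).card = p.countP (· % M = r) := by
  rw [residueQuotients, Multiset.card_map, Multiset.countP_eq_card_filter]

theorem card_residueLift (u : Multiset ℕ) : (residueLift M r u).card = u.card :=
  Multiset.card_map _ _

theorem sum_residueLift (u : Multiset ℕ) :
    (residueLift M r u).sum = M * u.sum + r * u.card := by
  rw [residueLift, Multiset.sum_map_add, Multiset.sum_map_mul_left]
  simp [mul_comm]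

theorem mod_eq_of_mem_residueLift (hr : r < M) {u : Multiset ℕ} {x : ℕ}
    (hx : x ∈ residueLift M r u) : x % M = r := by
  obtain ⟨y, -, rfl⟩ := Multiset.mem_map.1 hx
  rw [Nat.mul_add_mod, Nat.mod_eq_of_lt hr]

theorem residueLift_residueQuotients (p : Multiset ℕ) :
    residueLift M r (residueQuotients M r p) = p.filter (· % M = r) := by
  rw [residueLift, residueQuotients, Multiset.map_map]
  refine (Multiset.map_congr rfl fun x hx => ?_).trans (Multiset.map_id _)
  have hxr := (Multiset.mem_filter.1 hx).2
  simpa [← hxr] using Nat.div_add_mod x M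

theorem residueQuotients_residueLift (hr : r < M) (u : Multiset ℕ) :
    residueQuotients M r (residueLift M r u) = u := by
  rw [residueQuotients,
    Multiset.filter_eq_self.2 fun x hx => mod_eq_of_mem_residueLift hr hx,
    residueLift, Multiset.map_map]
  refine (Multiset.map_congr rfl fun x _ => ?_).trans u.map_id
  simp [Nat.mul_add_div (Nat.zero_lt_of_lt hr), Nat.div_eq_of_lt hr]

theorem residueQuotients_residueLift_of_ne (hr : r < M) (hne : r ≠ s) (u : Multiset ℕ) :
    residueQuotients M s (residueLift M r u) = 0 := by
  rw [residueQuotients, Multiset.filter_eq_nil.2, Multiset.map_zero]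
  exact fun x hx hx' => hne ((mod_eq_of_mem_residueLift hr hx).symm.trans hx')

theorem residueQuotients_add (p q : Multiset ℕ) :
    residueQuotients M r (p + q) = residueQuotients M r p + residueQuotients M r q := by
  simp [residueQuotients]

theorem residueQuotients_residueLift_add_residueLift (hr : r < M) (hs : s < M) (hne : r ≠ s)
    (u v : Multiset ℕ) : residueQuotients M r (residueLift M r u + residueLift M s v) = u := by
  rw [residueQuotients_add, residueQuotients_residueLift hr,
    residueQuotients_residueLift_of_ne hs hne.symm, add_zero]

theorem residueLift_add_residueLift_residueQuotients (hne : r ≠ s) {p : Multiset ℕ}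
    (hp : ∀ x ∈ p, x % M = r ∨ x % M = s) :
    residueLift M r (residueQuotients M r p) + residueLift M s (residueQuotients M s p) = p := by
  rw [residueLift_residueQuotients, residueLift_residueQuotients]
  conv_rhs => rw [← Multiset.filter_add_not (· % M = r) p]
  congr 1
  refine Multiset.filter_congr fun x hx => ?_
  have := hp x hx
  omega

/-- The partitions of `N` with exactly `j` parts `≡ r` modulo `M`, exactly `k` parts `≡ s`, and
no others, for remainders `r ≠ s`. -/
def residuePartitions (M r s N j k : ℕ) : Finset (Nat.Partition N) :=
  {p | (∀ x ∈ p.parts, x % M = r ∨ x % M = s) ∧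
    p.parts.countP (· % M = r) = j ∧ p.parts.countP (· % M = s) = k}

theorem sum_residueQuotients_of_mem_residuePartitions (hne : r ≠ s) {N j k : ℕ}
    {p : Nat.Partition N} (hp : p ∈ residuePartitions M r s N j k) :
    M * ((residueQuotients M r p.parts).sum + (residueQuotients M s p.parts).sum)
      + (r * j + s * k) = N := by
  obtain ⟨hmod, hj, hk⟩ := (mem_filter.1 hp).2
  have hsum := p.parts_sum
  rw [← residueLift_add_residueLift_residueQuotients hne hmod, Multiset.sum_add,
    sum_residueLift, sum_residueLift, card_residueQuotients, card_residueQuotients, hj, hk] at hsum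
  linarith

theorem card_residuePartitions (hr : r < M) (hs : s < M) (hne : r ≠ s) (hr0 : 0 < r)
    (hs0 : 0 < s) (j k K : ℕ) :
    #(residuePartitions M r s (M * K + (r * j + s * k)) j k) =
      #(multisetPairsOfCardSum j k K) := by
  refine card_bij
    (fun p _ => (residueQuotients M r p.parts, residueQuotients M s p.parts)) ?_ ?_ ?_
  · intro p hp
    have hsum := sum_residueQuotients_of_mem_residuePartitions hne hp
    obtain ⟨-, hj, hk⟩ := (mem_filter.1 hp).2
    rw [mem_multisetPairsOfCardSum, card_residueQuotients, card_residueQuotients]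
    exact ⟨hj, hk, Nat.eq_of_mul_eq_mul_left (Nat.zero_lt_of_lt hr) (Nat.add_right_cancel hsum)⟩
  · intro p hp q hq hpq
    obtain ⟨hpq, hpq'⟩ := Prod.mk.inj hpq
    refine Nat.Partition.ext ?_
    rw [← residueLift_add_residueLift_residueQuotients hne (mem_filter.1 hp).2.1, hpq, hpq',
      residueLift_add_residueLift_residueQuotients hne (mem_filter.1 hq).2.1]
  · rintro ⟨u, v⟩ huv
    obtain ⟨rfl, rfl, rfl⟩ := mem_multisetPairsOfCardSum.1 huv
    have hu := residueQuotients_residueLift_add_residueLift hr hs hne u v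
    have hv := residueQuotients_residueLift_add_residueLift hs hr hne.symm v u
    rw [add_comm] at hv
    have hmod : ∀ x ∈ residueLift M r u + residueLift M s v, x % M = r ∨ x % M = s :=
      fun x hx => (Multiset.mem_add.1 hx).imp
        (mod_eq_of_mem_residueLift hr) (mod_eq_of_mem_residueLift hs)
    refine ⟨⟨residueLift M r u + residueLift M s v, fun {x} hx => ?_, ?_⟩, ?_, ?_⟩
    · rcases Nat.eq_zero_or_pos x with rfl | hx0
      · have := hmod 0 hx
        rw [Nat.zero_mod] at this
        omega
      · exact hx0
    · rw [Multiset.sum_add, sum_residueLift, sum_residueLift]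
      ring
    · refine mem_filter.2 ⟨mem_univ _, hmod, ?_, ?_⟩
      · rw [← card_residueQuotients, hu]
      · rw [← card_residueQuotients, hv]
    · rw [hu, hv]

theorem card_residuePartitions_eq_coeff (hr : r < M) (hs : s < M) (hne : r ≠ s) (hr0 : 0 < r)
    (hs0 : 0 < s) {j k e : ℕ} (he : r * j + s * k = M * e) (n : ℕ) :
    (#(residuePartitions M r s (M * n) j k) : ℤ) =
      coeff n (X ^ e * (multisetSeries j * multisetSeries k)) := by
  rw [coeff_X_pow_mul']
  split_ifs with hen
  · obtain ⟨K, rfl⟩ := Nat.exists_eq_add_of_le' hen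
    rw [Nat.add_sub_cancel, coeff_multisetSeries_mul, mul_add, ← he,
      card_residuePartitions hr hs hne hr0 hs0]
  · rw [Nat.cast_eq_zero, card_eq_zero, eq_empty_iff_forall_notMem]
    intro p hp
    have hsum := sum_residueQuotients_of_mem_residuePartitions hne hp
    rw [he] at hsum
    exact hen (Nat.le_of_mul_le_mul_left (hsum ▸ Nat.le_add_left _ _) (Nat.zero_lt_of_lt hr))

theorem dvd_of_nonempty_residuePartitions (hne : r ≠ s) {n j k : ℕ}
    (h : (residuePartitions M r s (M * n) j k).Nonempty) : M ∣ r * j + s * k := by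
  obtain ⟨p, hp⟩ := h
  have hsum := sum_residueQuotients_of_mem_residuePartitions hne hp
  exact (Nat.dvd_add_right (dvd_mul_right _ _)).1 (hsum ▸ dvd_mul_right M n)

theorem card_eq_sum_card_residuePartitions (hne : r ≠ s) (N m : ℕ) :
    #{p : Nat.Partition N | p.parts.card = m ∧ ∀ x ∈ p.parts, x % M = r ∨ x % M = s} =
      ∑ x ∈ antidiagonal m, #(residuePartitions M r s N x.1 x.2) := by
  have card_eq : ∀ p : Nat.Partition N, (∀ x ∈ p.parts, x % M = r ∨ x % M = s) →
      p.parts.card = p.parts.countP (· % M = r) + p.parts.countP (· % M = s) := by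
    intro p hp
    conv_lhs => rw [← residueLift_add_residueLift_residueQuotients hne hp]
    simp only [Multiset.card_add, card_residueLift, card_residueQuotients]
  rw [card_eq_sum_card_fiberwise (t := antidiagonal m)
    (f := fun p => (p.parts.countP (· % M = r), p.parts.countP (· % M = s)))]
  · refine sum_congr rfl fun x hx => congrArg card ?_
    ext p
    have := card_eq p
    simp only [residuePartitions, mem_filter, mem_univ, true_and, Prod.ext_iff,
      ← mem_antidiagonal.1 hx]
    grind
  · intro p hp
    obtain ⟨hcard, hmod⟩ := (mem_filter.1 hp).2
    exact mem_antidiagonal.2 ((card_eq p hmod).symm.trans hcard)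

end Residues

section OppositeResidues

variable {M a a' : ℕ}

theorem card_residuePartitions_add_swap (haa' : a + a' = M) (hne : a ≠ a') (ha : 0 < a)
    (ha' : 0 < a') {d α α' : ℕ} (hα : a * d = M * α) (hd : α + α' = d) (n k : ℕ) :
    (#(residuePartitions M a a' (M * n) (k + d) k) : ℤ)
        + #(residuePartitions M a a' (M * n) k (k + d)) =
      coeff n (X ^ k * multisetSeries k * (multisetSeries (k + d) * (X ^ α + X ^ α'))) := by
  have e : a * (k + d) + a' * k = M * (k + α) := by
    rw [mul_add M, ← hα, ← haa']
    ring
  have e' : a * k + a' * (k + d) = M * (k + α') := by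
    subst haa' hd
    linarith
  rw [card_residuePartitions_eq_coeff (by omega) (by omega) hne ha ha' e,
    card_residuePartitions_eq_coeff (by omega) (by omega) hne ha ha' e', ← map_add]
  congr 1
  ring

theorem residuePartitions_eq_empty_of_not_dvd (haa' : a + a' = M) (hne : a ≠ a') {d : ℕ}
    (hd : ¬ M ∣ a * d) (n k : ℕ) :
    residuePartitions M a a' (M * n) (k + d) k = ∅ ∧
      residuePartitions M a a' (M * n) k (k + d) = ∅ := by
  simp only [← not_nonempty_iff_eq_empty]
  refine ⟨fun h => hd ?_, fun h => hd ?_⟩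
  · have hdvd := dvd_of_nonempty_residuePartitions hne h
    have split : a * (k + d) + a' * k = M * k + a * d := by
      rw [← haa']
      ring
    rwa [split, Nat.dvd_add_right (dvd_mul_right M k)] at hdvd
  · have hdvd := dvd_of_nonempty_residuePartitions hne h
    have split : a * k + a' * (k + d) + a * d = M * (k + d) := by
      rw [← haa']
      ring
    exact (Nat.dvd_add_right hdvd).1 (split ▸ dvd_mul_right M (k + d))

end OppositeResidues

theorem card_residuePartitions_add_swap_le {M a b : ℕ} (ha : 0 < a) (hab : a < b) (hb : 2 * b < M)
    (hbM : b.gcd M ∣ a) (n k d : ℕ) :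
    #(residuePartitions M b (M - b) (M * n) (k + d) k)
        + #(residuePartitions M b (M - b) (M * n) k (k + d)) ≤
      #(residuePartitions M a (M - a) (M * n) (k + d) k)
        + #(residuePartitions M a (M - a) (M * n) k (k + d)) := by
  by_cases hdvd : M ∣ b * d
  · have hgcd : M ∣ b.gcd M * d := by
      rw [← Nat.gcd_mul_right]
      exact Nat.dvd_gcd hdvd (dvd_mul_right M d)
    obtain ⟨α, hα⟩ : M ∣ a * d := hgcd.trans (mul_dvd_mul_right hbM d)
    obtain ⟨β, hβ⟩ := hdvd
    rcases Nat.eq_zero_or_pos d with rfl | hd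
    · zify
      rw [card_residuePartitions_add_swap (by omega) (by omega) (by omega) (by omega)
          (show b * 0 = M * 0 from rfl) (add_zero 0) n k,
        card_residuePartitions_add_swap (by omega) (by omega) ha (by omega)
          (show a * 0 = M * 0 from rfl) (add_zero 0) n k]
    have hαβ : α < β := Nat.lt_of_mul_lt_mul_left (a := M) (by rw [← hα, ← hβ]; gcongr)
    have hβd : 2 * β < d := Nat.lt_of_mul_lt_mul_left (a := M) (by
      rw [mul_left_comm, ← hβ, ← mul_assoc]
      gcongr)
    zify
    rw [card_residuePartitions_add_swap (by omega) (by omega) (by omega) (by omega) hβ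
        (Nat.add_sub_of_le (by omega)) n k,
      card_residuePartitions_add_swap (by omega) (by omega) ha (by omega) hα
        (Nat.add_sub_of_le (by omega)) n k,
      ← sub_nonneg, ← map_sub, ← mul_sub, ← mul_sub]
    exact ((hasNonnegCoeffs_X_pow k).mul (hasNonnegCoeffs_multisetSeries k)).mul
      (hasNonnegCoeffs_multisetSeries_mul_sub (by omega) hαβ (by omega) (by omega)) n
  · obtain ⟨h, h'⟩ :=
      residuePartitions_eq_empty_of_not_dvd (a' := M - b) (by omega) (by omega) hdvd n k
    simp [h, h']

theorem sum_antidiagonal_le_of_add_swap_le {A R : Type*} [AddCommMonoid A] [HasAntidiagonal A]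
    [AddCommMonoid R] [LinearOrder R] [IsOrderedCancelAddMonoid R] {f g : A × A → R} {m : A}
    (h : ∀ x ∈ antidiagonal m, f x + f x.swap ≤ g x + g x.swap) :
    ∑ x ∈ antidiagonal m, f x ≤ ∑ x ∈ antidiagonal m, g x := by
  have sum_swap (F : A × A → R) :
      ∑ x ∈ antidiagonal m, F x.swap = ∑ x ∈ antidiagonal m, F x := by
    conv_rhs => rw [← HasAntidiagonal.map_swap_antidiagonal, sum_map]
    rfl
  have hsum := sum_le_sum h
  simp only [sum_add_distrib, sum_swap] at hsum
  by_contra! hlt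
  exact hsum.not_gt (add_lt_add hlt hlt)

end

theorem partition_inequality_mod_M_general (M a b : ℕ) (ha : 1 ≤ a) (hab : a < b) (hb : 2 * b < M)
    (hbM : b.gcd M ∣ a) (n m : ℕ) :
    (Finset.univ.filter (fun p : Nat.Partition (M * n) =>
        Multiset.card p.parts = m ∧
        ∀ x ∈ p.parts, x % M = a ∨ x % M = M - a)).card ≥
    (Finset.univ.filter (fun p : Nat.Partition (M * n) =>
        Multiset.card p.parts = m ∧
        ∀ x ∈ p.parts, x % M = b ∨ x % M = M - b)).card := by
  rw [card_eq_sum_card_residuePartitions (by omega), card_eq_sum_card_residuePartitions (by omega)]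
  refine sum_antidiagonal_le_of_add_swap_le fun ⟨j, k⟩ _ => ?_
  rcases le_total k j with hkj | hjk
  · obtain ⟨d, rfl⟩ := Nat.exists_eq_add_of_le hkj
    exact card_residuePartitions_add_swap_le ha hab hb hbM n k d
  · obtain ⟨d, rfl⟩ := Nat.exists_eq_add_of_le hjk
    have := card_residuePartitions_add_swap_le ha hab hb hbM n j d
    simpa [add_comm] using this

theorem partition_inequality_mod_M (M a b : ℕ) (hM : 5 ≤ M)
    (ha : 1 ≤ a) (hab : a < b) (hb : 2 * b < M)
    (haM : Nat.Coprime a M) (hbM : Nat.Coprime b M)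
    (n m : ℕ) (hn : 1 ≤ n) (hm1 : 1 ≤ m) (hm2 : m ≤ M * n) :
    (Finset.univ.filter (fun p : Nat.Partition (M * n) =>
        Multiset.card p.parts = m ∧
        ∀ x ∈ p.parts, x % M = a ∨ x % M = M - a)).card ≥
    (Finset.univ.filter (fun p : Nat.Partition (M * n) =>
        Multiset.card p.parts = m ∧
        ∀ x ∈ p.parts, x % M = b ∨ x % M = M - b)).card :=
  partition_inequality_mod_M_general M a b ha hab hb (hbM.gcd_eq_one ▸ one_dvd a) n m
end

section
/- Let M ≥ 6 be an even integer and let a, b be integers with 1 ≤ a < b < M/2 and gcd(a,M) = gcd(b,M) = 1. Then for every integer n ≥ 0 and every integer m with 1 ≤ m ≤ Mn + M/2, the number of partitions of Mn + M/2 into exactly m distinct parts, each part congruent to a or M−a modulo M, is greater than or equal to the number of partitions of Mn + M/2 into exactly m distinct parts, each part congruent to b or M−b modulo M. (This is part (ii) of the second main theorem, equivalently Corollary 2(ii).) -/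
/-!
Writing the parts congruent to `a` as `M k + a` and those congruent to `-a` as `M k + (M - a)`, a
partition with `r` parts of the first kind and `s` of the second becomes a pair `(K, L)` of finite
sets of naturals with `M (∑ K + ∑ L) = N - a r - (M - a) s`. Let `c r s x` be the number of pairs
with `M (∑ K + ∑ L) = x`. Its generating function in `x` is a power of `q` divided by
`∏_{i ≤ r} (1 - q ^ (M i)) ∏_{j ≤ s} (1 - q ^ (M j))`, so that multiplying it by
`(1 - q ^ (M g)) (1 - q ^ (M h))` with `g < h ≤ r` only cancels two of the factors: the mixed second
difference of `c r s` with steps `M g` and `M h` is nonnegative.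

Put `d = r - s ≥ 0` and pair the type `(r, s)` with `(s, r)`. The four values of `c r s` belonging
to `a` and `b` sit at the vertices `y + (b - a) d + (M - a - b) d`, `y` (for `a`) and
`y + (M - a - b) d`, `y + (b - a) d` (for `b`). If there is any pair counted for `b`, then `M`
divides `2 d`, hence both steps by parity, and the second difference compares the four values.
-/

open Filter Finset fwdDiff

section ForwardDifference

variable {G : Type*} [AddCommGroup G]

lemma fwdDiff_comm {A : Type*} [AddCommMonoid A] (g h : A) (f : A → G) :
    Δ_[g] (Δ_[h] f) = Δ_[h] (Δ_[g] f) := by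
  funext x
  simp only [fwdDiff, add_right_comm x g h]
  abel

lemma nonneg_of_fwdDiff_nonneg [PartialOrder G] [IsOrderedAddMonoid G] {f : ℤ → G} {h : ℤ}
    (hh : 0 < h) (hf : ∀ᶠ x in atBot, 0 ≤ f x) (hΔ : 0 ≤ Δ_[h] f) : 0 ≤ f := by
  intro x
  have hmono : Antitone fun n : ℕ ↦ f (x - n * h) := antitone_nat_of_succ_le fun n ↦ by
    have hstep : x - (n + 1 : ℕ) * h + h = x - n * h := by push_cast; ring
    simpa only [fwdDiff, hstep, Pi.zero_apply, sub_nonneg] using hΔ (x - (n + 1 : ℕ) * h)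
  obtain ⟨B, hB⟩ := eventually_atBot.1 hf
  have hle : x - (x - B).toNat * h ≤ B := by nlinarith [Int.self_le_toNat (x - B)]
  simpa using (hB _ hle).trans (hmono (Nat.zero_le _))

/-- A sequence of functions on `ℤ` whose generating functions `F r = ∑ x, f r x * q ^ x` are
Laurent series satisfying `(1 - q ^ (M * (r + 1))) * F (r + 1) = q ^ (M * r) * F r`, so that `F r`
is, up to a power of `q`, the quotient of `F 0` by the `q`-Pochhammer symbol
`∏_{1 ≤ i ≤ r} (1 - q ^ (M * i))`. The recurrence is stated for coefficients. -/
structure IsPochhammerFamily (M : ℤ) (f : ℕ → ℤ → G) : Prop where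
  eventually_eq_zero (r : ℕ) : ∀ᶠ x in atBot, f r x = 0
  fwdDiff_succ (r : ℕ) (x : ℤ) : Δ_[M * (r + 1 : ℕ)] (f (r + 1)) x = f r (x + M)

namespace IsPochhammerFamily

variable {M : ℤ} {f : ℕ → ℤ → G}

lemma fwdDiff (hf : IsPochhammerFamily M f) (g : ℤ) :
    IsPochhammerFamily M fun r ↦ Δ_[g] (f r) where
  eventually_eq_zero r := by
    have hshift := (tendsto_atBot_add_const_right atBot g tendsto_id).eventually
      (hf.eventually_eq_zero r)
    filter_upwards [hf.eventually_eq_zero r, hshift] with x hx hxg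
    simp only [id] at hxg
    simp [_root_.fwdDiff, hx, hxg]
  fwdDiff_succ r x := by
    rw [fwdDiff_comm, funext (hf.fwdDiff_succ r)]
    simp only [_root_.fwdDiff, add_right_comm]

variable [PartialOrder G] [IsOrderedAddMonoid G]

lemma nonneg_of_le (hf : IsPochhammerFamily M f) (hM : 0 < M) {k r : ℕ} (hk : 0 ≤ f k)
    (hkr : k ≤ r) : 0 ≤ f r := by
  induction r, hkr using Nat.le_induction with
  | base => exact hk
  | succ r _ ih =>
    refine nonneg_of_fwdDiff_nonneg (h := M * (r + 1 : ℕ)) (by positivity)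
      ((hf.eventually_eq_zero (r + 1)).mono fun x hx ↦ hx.ge) fun x ↦ ?_
    rw [hf.fwdDiff_succ]
    exact ih (x + M)

lemma fwdDiff_nonneg_of_lt (hf : IsPochhammerFamily M f) (hM : 0 < M) {k r : ℕ} (hk : 0 ≤ f k)
    (hkr : k < r) : 0 ≤ Δ_[M * (k + 1 : ℕ)] (f r) :=
  (hf.fwdDiff _).nonneg_of_le hM (fun x ↦ (hk (x + M)).trans_eq (hf.fwdDiff_succ k x).symm) hkr

lemma fwdDiff_nonneg (hf : IsPochhammerFamily M f) (hM : 0 < M) (h₀ : 0 ≤ f 0) {g r : ℕ}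
    (hgr : g ≤ r) : 0 ≤ Δ_[M * g] (f r) := by
  cases g with
  | zero => intro x; simp [_root_.fwdDiff]
  | succ k => exact hf.fwdDiff_nonneg_of_lt hM (hf.nonneg_of_le hM h₀ k.zero_le) hgr

lemma fwdDiff_fwdDiff_nonneg (hf : IsPochhammerFamily M f) (hM : 0 < M) (h₀ : 0 ≤ f 0)
    {g h r : ℕ} (hgh : g < h) (hhr : h ≤ r) : 0 ≤ Δ_[M * h] (Δ_[M * g] (f r)) := by
  obtain ⟨k, rfl⟩ := Nat.exists_eq_add_one_of_ne_zero (Nat.ne_zero_of_lt hgh)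
  exact (hf.fwdDiff (M * g)).fwdDiff_nonneg_of_lt hM
    (hf.fwdDiff_nonneg hM h₀ (Nat.le_of_lt_succ hgh)) hhr

end IsPochhammerFamily

end ForwardDifference

section ScaledPairs

/-- The pairs `(K, L)` of sets of naturals with `r` and `s` elements and `M (∑ K + ∑ L) = x`; they
parametrize the partitions with `r` parts congruent to `a` and `s` parts congruent to `-a` modulo
`M`. The total `x` is an integer so that forward differences in `x` need no truncation. The bound
on the elements of `K` and `L`, automatic for `0 < M`, makes this a finite set. -/
def scaledPairs (M r s : ℕ) (x : ℤ) : Finset (Finset ℕ × Finset ℕ) :=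
  {p ∈ (range (x.toNat + 1)).powersetCard r ×ˢ (range (x.toNat + 1)).powersetCard s |
    (M * (∑ k ∈ p.1, k + ∑ k ∈ p.2, k) : ℤ) = x}

lemma subset_range_succ_of_sum_le {S : Finset ℕ} {N : ℕ} (h : ∑ k ∈ S, k ≤ N) :
    S ⊆ range (N + 1) := fun _ hx ↦
  mem_range_succ_iff.2 ((single_le_sum_of_canonicallyOrdered (f := fun k : ℕ ↦ k) hx).trans h)

variable {M r s : ℕ} {x : ℤ}

lemma mem_scaledPairs (hM : 0 < M) {p : Finset ℕ × Finset ℕ} :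
    p ∈ scaledPairs M r s x ↔
      p.1.card = r ∧ p.2.card = s ∧ (M * (∑ k ∈ p.1, k + ∑ k ∈ p.2, k) : ℤ) = x := by
  simp only [scaledPairs, mem_filter, mem_product, mem_powersetCard]
  refine ⟨fun ⟨⟨⟨_, hr⟩, _, hs⟩, hx⟩ ↦ ⟨hr, hs, hx⟩, fun ⟨hr, hs, hx⟩ ↦ ?_⟩
  have hle : ∑ k ∈ p.1, k + ∑ k ∈ p.2, k ≤ x.toNat := by
    rw [← hx]
    exact_mod_cast Nat.le_mul_of_pos_left _ hM
  exact ⟨⟨⟨subset_range_succ_of_sum_le (by omega), hr⟩, subset_range_succ_of_sum_le (by omega), hs⟩,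
    hx⟩

lemma scaledPairs_eq_empty_of_neg (hx : x < 0) : scaledPairs M r s x = ∅ :=
  filter_eq_empty_iff.2 fun _ _ h ↦ (h.symm ▸ hx).not_ge (by positivity)

lemma scaledPairs_eq_empty_of_not_dvd (hx : ¬ (M : ℤ) ∣ x) : scaledPairs M r s x = ∅ :=
  filter_eq_empty_iff.2 fun _ _ h ↦ hx ⟨_, h.symm⟩

lemma card_scaledPairs_comm (hM : 0 < M) : #(scaledPairs M r s x) = #(scaledPairs M s r x) :=
  card_equiv (Equiv.prodComm _ _) fun p ↦ by
    simp only [mem_scaledPairs hM, Equiv.prodComm_apply, Prod.fst_swap, Prod.snd_swap]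
    rw [and_left_comm, add_comm]

lemma sum_map_addRight_one (K : Finset ℕ) :
    ∑ k ∈ K.map (addRightEmbedding 1), k = ∑ k ∈ K, k + #K := by
  simp [sum_add_distrib]

lemma exists_map_addRight_one_eq {K : Finset ℕ} (hK : 0 ∉ K) :
    ∃ K' : Finset ℕ, K'.map (addRightEmbedding 1) = K := by
  have hsub : (K : Set ℕ) ⊆ Nat.succ '' Set.univ := by
    rw [Set.image_univ, Nat.range_succ]
    exact fun k hk ↦ Nat.pos_of_ne_zero (ne_of_mem_of_not_mem hk hK)
  obtain ⟨K', -, rfl⟩ := subset_set_image_iff.1 hsub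
  exact ⟨K', map_eq_image _ _⟩

lemma card_filter_zero_notMem_scaledPairs (hM : 0 < M) (r s : ℕ) (x : ℤ) :
    #{p ∈ scaledPairs M r s (x + M * r) | 0 ∉ p.1} = #(scaledPairs M r s x) := by
  symm
  refine card_nbij (Prod.map (map (addRightEmbedding 1)) id) ?_
    ((Finset.map_injective _).prodMap Function.injective_id).injOn ?_
  · rintro ⟨K, L⟩ h
    simp only [mem_coe, mem_scaledPairs hM, mem_filter, Prod.map_apply, id] at h ⊢
    obtain ⟨hr, hs, hx⟩ := h
    refine ⟨⟨(card_map _).trans hr, hs, ?_⟩, by simp⟩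
    zify [← Nat.cast_sum, sum_map_addRight_one] at hx ⊢
    rw [hr]
    linear_combination hx
  · rintro ⟨K, L⟩ h
    simp only [mem_coe, mem_scaledPairs hM, mem_filter] at h
    obtain ⟨⟨hr, hs, hx⟩, h0⟩ := h
    obtain ⟨K, rfl⟩ := exists_map_addRight_one_eq h0
    rw [card_map] at hr
    refine ⟨(K, L), (mem_scaledPairs hM).2 ⟨hr, hs, ?_⟩, rfl⟩
    zify [← Nat.cast_sum, sum_map_addRight_one] at hx ⊢
    rw [hr] at hx
    linear_combination hx

lemma card_filter_zero_mem_scaledPairs (hM : 0 < M) (r s : ℕ) (x : ℤ) :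
    #{p ∈ scaledPairs M (r + 1) s (x + M * r) | 0 ∈ p.1} = #(scaledPairs M r s x) := by
  rw [← card_filter_zero_notMem_scaledPairs hM]
  refine card_nbij' (Prod.map (erase · 0) id) (Prod.map (insert 0) id) ?_ ?_ ?_ ?_
  all_goals
    rintro ⟨K, L⟩ h
    simp only [mem_coe, mem_scaledPairs hM, mem_filter, Prod.map_apply, id] at h ⊢
  · obtain ⟨⟨hr, hs, hx⟩, h0⟩ := h
    rw [card_erase_of_mem h0, sum_erase K Nat.cast_zero]
    exact ⟨⟨by omega, hs, hx⟩, notMem_erase 0 K⟩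
  · obtain ⟨⟨hr, hs, hx⟩, h0⟩ := h
    rw [card_insert_of_notMem h0, sum_insert h0]
    exact ⟨⟨by omega, hs, by simpa using hx⟩, mem_insert_self 0 K⟩
  · rw [insert_erase h.2]
  · rw [erase_insert h.2]

lemma card_scaledPairs_succ (hM : 0 < M) (r s : ℕ) (x : ℤ) :
    #(scaledPairs M (r + 1) s (x + M * (r + 1 : ℕ))) =
      #(scaledPairs M r s (x + M)) + #(scaledPairs M (r + 1) s x) := by
  have hx : x + M * (r + 1 : ℕ) = x + M + M * r := by push_cast; ring
  rw [← card_filter_add_card_filter_not (fun p : Finset ℕ × Finset ℕ ↦ 0 ∈ p.1),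
    card_filter_zero_notMem_scaledPairs hM, hx, card_filter_zero_mem_scaledPairs hM]

lemma isPochhammerFamily_card_scaledPairs (hM : 0 < M) (s : ℕ) :
    IsPochhammerFamily M fun r x ↦ (#(scaledPairs M r s x) : ℤ) where
  eventually_eq_zero r := (eventually_lt_atBot 0).mono fun x hx ↦ by
    rw [scaledPairs_eq_empty_of_neg hx, card_empty, Nat.cast_zero]
  fwdDiff_succ r x := by
    rw [_root_.fwdDiff, card_scaledPairs_succ hM, Nat.cast_add, add_sub_cancel_right]

lemma card_scaledPairs_add_le (hM : 0 < M) {g h : ℕ} (hgh : g < h) (hhr : h ≤ r) (y : ℤ) :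
    #(scaledPairs M r s (y + M * g)) + #(scaledPairs M r s (y + M * h)) ≤
      #(scaledPairs M r s (y + M * h + M * g)) + #(scaledPairs M r s y) := by
  have hΔ := (isPochhammerFamily_card_scaledPairs hM s).fwdDiff_fwdDiff_nonneg
    (Nat.cast_pos.2 hM) (fun _ ↦ Nat.cast_nonneg _) hgh hhr y
  simp only [_root_.fwdDiff, Pi.zero_apply] at hΔ
  omega

end ScaledPairs

section ResidueParts

variable {M a : ℕ}

/-- Enumerates the naturals congruent to `a` (left summand) or to `-a` (right summand) modulo
`M`. -/
def residuePart (M a : ℕ) : ℕ ⊕ ℕ → ℕ :=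
  Sum.elim (fun k ↦ M * k + a) (fun k ↦ M * k + (M - a))

lemma residuePart_injective (ha : 0 < a) (haM : 2 * a < M) :
    Function.Injective (residuePart M a) := by
  have hinj (c : ℕ) : Function.Injective fun k ↦ M * k + c :=
    (add_left_injective c).comp (mul_right_injective₀ (by omega))
  refine (hinj a).sumElim (hinj (M - a)) fun k l hkl ↦ ?_
  have hmod := congrArg (· % M) hkl
  simp only [Nat.mul_add_mod, Nat.mod_eq_of_lt (show a < M by omega),
    Nat.mod_eq_of_lt (show M - a < M by omega)] at hmod
  omega

lemma mem_range_mul_add_iff_mod_eq {c x : ℕ} (hc : c < M) :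
    x ∈ Set.range (fun k ↦ M * k + c) ↔ x % M = c := by
  constructor
  · rintro ⟨k, rfl⟩
    exact (Nat.mul_add_mod ..).trans (Nat.mod_eq_of_lt hc)
  · rintro rfl
    exact ⟨x / M, Nat.div_add_mod x M⟩

lemma mem_range_residuePart (ha : 0 < a) (haM : a < M) {x : ℕ} :
    x ∈ Set.range (residuePart M a) ↔ x % M = a ∨ x % M = M - a := by
  rw [residuePart, Set.Sum.elim_range, Set.mem_union, mem_range_mul_add_iff_mod_eq haM,
    mem_range_mul_add_iff_mod_eq (by omega)]

/-- The set of parts encoded by a pair of sets of naturals: `K` gives the parts congruent to `a`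
modulo `M`, and `L` those congruent to `-a`. -/
def residueFinset (M a : ℕ) (p : Finset ℕ × Finset ℕ) : Finset ℕ :=
  (p.1.disjSum p.2).image (residuePart M a)

lemma residueFinset_injective (ha : 0 < a) (haM : 2 * a < M) :
    Function.Injective (residueFinset M a) :=
  (image_injective (residuePart_injective ha haM)).comp sumEquiv.symm.injective

lemma card_residueFinset (ha : 0 < a) (haM : 2 * a < M) (p : Finset ℕ × Finset ℕ) :
    #(residueFinset M a p) = #p.1 + #p.2 := by
  rw [residueFinset, card_image_of_injective _ (residuePart_injective ha haM), card_disjSum]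

lemma sum_residueFinset (ha : 0 < a) (haM : 2 * a < M) (p : Finset ℕ × Finset ℕ) :
    ∑ x ∈ residueFinset M a p, x =
      M * (∑ k ∈ p.1, k + ∑ k ∈ p.2, k) + a * #p.1 + (M - a) * #p.2 := by
  rw [residueFinset, sum_image (residuePart_injective ha haM).injOn, sum_disjSum]
  simp only [residuePart, Sum.elim_inl, Sum.elim_inr, sum_add_distrib, mul_sum, sum_const,
    smul_eq_mul, mul_add]
  ring

lemma exists_residueFinset_eq_iff (ha : 0 < a) (haM : a < M) {S : Finset ℕ} :
    (∃ p, residueFinset M a p = S) ↔ ∀ x ∈ S, x % M = a ∨ x % M = M - a := by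
  simp only [← mem_range_residuePart ha haM]
  constructor
  · rintro ⟨p, rfl⟩ x hx
    obtain ⟨u, -, rfl⟩ := mem_image.1 hx
    exact Set.mem_range_self u
  · intro hS
    obtain ⟨U, -, rfl⟩ := subset_set_image_iff.1 ((Set.image_univ (f := residuePart M a)).symm ▸ hS)
    exact ⟨(U.toLeft, U.toRight), congrArg _ toLeft_disjSum_toRight⟩

end ResidueParts

section CountingPartitions

lemma card_partition_eq_card_finset {Q : ℕ → Prop} [DecidablePred Q] (hQ : ¬ Q 0) (N m : ℕ) :
    #{p : Nat.Partition N | p.parts.card = m ∧ p.parts.Nodup ∧ ∀ x ∈ p.parts, Q x} =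
      #{S ∈ (range (N + 1)).powersetCard m | ∑ x ∈ S, x = N ∧ ∀ x ∈ S, Q x} := by
  refine card_bij (fun p hp ↦ ⟨p.parts, (mem_filter.1 hp).2.2.1⟩) ?_ ?_ ?_
  · intro p hp
    obtain ⟨-, hm, hnodup, hQp⟩ := mem_filter.1 hp
    have hsum : ∑ x ∈ (⟨p.parts, hnodup⟩ : Finset ℕ), x = N := by
      rw [sum_eq_multiset_sum, Multiset.map_id', p.parts_sum]
    exact mem_filter.2
      ⟨mem_powersetCard.2 ⟨subset_range_succ_of_sum_le hsum.le, hm⟩, hsum, hQp⟩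
  · exact fun p _ p' _ h ↦ Nat.Partition.ext (congrArg Finset.val h)
  · intro S hS
    obtain ⟨hS, hsum, hQS⟩ := mem_filter.1 hS
    have hpos {x : ℕ} (hx : x ∈ S.val) : 0 < x :=
      Nat.pos_of_ne_zero fun h0 ↦ hQ (h0 ▸ hQS x hx)
    refine ⟨⟨S.val, hpos, ?_⟩, ?_, rfl⟩
    · rw [← hsum, sum_eq_multiset_sum, Multiset.map_id']
    · exact mem_filter.2 ⟨mem_univ _, (mem_powersetCard.1 hS).2, S.nodup, hQS⟩

/-- The number of pairs encoding partitions of `N` into distinct parts of which `r` are congruent to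
`a` and `s` to `-a` modulo `M`, and no others. -/
def residueCount (M a N r s : ℕ) : ℕ :=
  #(scaledPairs M r s (N - a * r - (M - a) * s))

lemma mem_scaledPairs_sub_iff {M a N : ℕ} (ha : 0 < a) (haM : 2 * a < M)
    {p : Finset ℕ × Finset ℕ} {r s : ℕ} :
    p ∈ scaledPairs M r s (N - a * r - (M - a) * s) ↔
      #p.1 = r ∧ #p.2 = s ∧ ∑ x ∈ residueFinset M a p, x = N := by
  rw [mem_scaledPairs (by omega), sum_residueFinset ha haM]
  refine and_congr_right fun hr ↦ and_congr_right fun hs ↦ ?_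
  rw [hr, hs, ← Nat.cast_inj (R := ℤ)]
  push_cast [show a ≤ M by omega]
  constructor <;> intro h <;> linear_combination h

lemma card_residue_partition_eq_sum {M a : ℕ} (ha : 0 < a) (haM : 2 * a < M) (N m : ℕ) :
    #{p : Nat.Partition N | p.parts.card = m ∧ p.parts.Nodup ∧
        ∀ x ∈ p.parts, x % M = a ∨ x % M = M - a} =
      ∑ q ∈ antidiagonal m, residueCount M a N q.1 q.2 := by
  simp only [residueCount]
  rw [card_partition_eq_card_finset (by rw [Nat.zero_mod]; omega), ← card_biUnion,
    ← card_image_of_injective _ (residueFinset_injective ha haM)]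
  · congr 1
    ext S
    simp only [mem_filter, mem_powersetCard, ← exists_residueFinset_eq_iff ha (show a < M by omega),
      mem_image, mem_biUnion, HasAntidiagonal.mem_antidiagonal, mem_scaledPairs_sub_iff ha haM]
    constructor
    · rintro ⟨⟨-, hm⟩, hsum, p, rfl⟩
      rw [card_residueFinset ha haM] at hm
      exact ⟨p, ⟨(#p.1, #p.2), hm, rfl, rfl, hsum⟩, rfl⟩
    · rintro ⟨p, ⟨q, rfl, hr, hs, hsum⟩, rfl⟩
      rw [card_residueFinset ha haM, hr, hs]
      exact ⟨⟨subset_range_succ_of_sum_le hsum.le, rfl⟩, hsum, p, rfl⟩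
  · refine fun q _ q' _ hne ↦ disjoint_left.2 fun p hp hp' ↦ hne ?_
    rw [mem_scaledPairs_sub_iff ha haM] at hp hp'
    exact Prod.ext (hp.1.symm.trans hp'.1) (hp.2.1.symm.trans hp'.2.1)

end CountingPartitions

section Comparison

lemma dvd_mul_of_dvd_two_mul {M d e : ℤ} (hd : M ∣ 2 * d) (he : Even M → Even e) : M ∣ d * e := by
  rcases Int.even_or_odd M with hM | hM
  · obtain ⟨k, rfl⟩ := (he hM).two_dvd
    exact (hd.mul_right k).trans (dvd_of_eq (by ring))
  · exact ((Int.isCoprime_two_right.2 hM).dvd_of_dvd_mul_left hd).mul_right e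

lemma odd_of_coprime_of_even {a M : ℕ} (h : Nat.Coprime a M) (hM : Even M) : Odd a :=
  (h.coprime_dvd_right hM.two_dvd).odd_of_right

lemma sum_antidiagonal_le_of_add_swap_le_s3 {f g : ℕ × ℕ → ℕ} {m : ℕ}
    (h : ∀ q ∈ antidiagonal m, f q + f q.swap ≤ g q + g q.swap) :
    ∑ q ∈ antidiagonal m, f q ≤ ∑ q ∈ antidiagonal m, g q := by
  have hle := sum_le_sum h
  simp only [sum_add_distrib, Nat.sum_antidiagonal_swap] at hle
  omega

variable {M a b N : ℕ}

lemma residueCount_self (s : ℕ) :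
    residueCount M a N s s = #(scaledPairs M s s (N - M * s)) := by
  rw [residueCount]
  ring_nf

lemma residueCount_swap_eq (hM : 0 < M) (r s : ℕ) :
    residueCount M a N s r = #(scaledPairs M r s (N - a * s - (M - a) * r)) :=
  card_scaledPairs_comm hM

lemma dvd_two_mul_sub_of_residueCount_ne_zero (hb : Nat.Coprime b M) (hN : M ∣ 2 * N) {r s : ℕ}
    (h : residueCount M b N r s ≠ 0) : (M : ℤ) ∣ 2 * (r - s) := by
  have hdvd : (M : ℤ) ∣ N - b * r - (M - b) * s := by
    by_contra hndvd
    exact h (by rw [residueCount, scaledPairs_eq_empty_of_not_dvd hndvd, card_empty])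
  refine (Nat.isCoprime_iff_coprime.2 hb).symm.dvd_of_dvd_mul_left ?_
  have hN' : (M : ℤ) ∣ 2 * N := mod_cast hN
  have hsum := (hN'.sub (hdvd.mul_left 2)).sub (dvd_mul_right (M : ℤ) (2 * s))
  exact hsum.trans (dvd_of_eq (by ring))

lemma residueCount_add_swap_le_of_dvd (hab : a < b) (hbM : 2 * b < M) {s d : ℕ}
    (hsub : (M : ℤ) ∣ d * (b - a)) (hadd : (M : ℤ) ∣ d * (M - a - b)) :
    residueCount M b N (s + d) s + residueCount M b N s (s + d) ≤
      residueCount M a N (s + d) s + residueCount M a N s (s + d) := by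
  rcases d.eq_zero_or_pos with rfl | hd
  · simp only [add_zero, residueCount_self, le_refl]
  have hM : 0 < M := by omega
  obtain ⟨g, hg⟩ := hsub
  obtain ⟨h, hh⟩ := hadd
  lift g to ℕ using by nlinarith
  lift h to ℕ using by nlinarith
  have hgh : g < h := by
    zify
    nlinarith
  have hhd : h ≤ s + d := by
    zify
    nlinarith
  set y : ℤ := N - a * s - (M - a) * (s + d : ℕ) with hy
  have hyg : N - b * s - (M - b) * (s + d : ℕ) = y + M * g := by
    push_cast [hy]
    linear_combination hg
  have hyh : N - b * (s + d : ℕ) - (M - b) * s = y + M * h := by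
    push_cast [hy]
    linear_combination hh
  have hyhg : N - a * (s + d : ℕ) - (M - a) * s = y + M * h + M * g := by
    push_cast [hy]
    linear_combination hh + hg
  rw [residueCount_swap_eq hM (s + d), residueCount_swap_eq hM (s + d), residueCount, residueCount,
    hyg, hyh, hyhg, ← hy, add_comm]
  exact card_scaledPairs_add_le hM hgh hhd y

lemma residueCount_add_swap_le (hab : a < b) (hbM : 2 * b < M) (ha : Even M → Odd a)
    (hb : Nat.Coprime b M) (hN : M ∣ 2 * N) (r s : ℕ) :
    residueCount M b N r s + residueCount M b N s r ≤
      residueCount M a N r s + residueCount M a N s r := by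
  wlog hsr : s ≤ r generalizing r s
  · rw [add_comm, add_comm (residueCount M a N r s)]
    exact this s r (le_of_not_ge hsr)
  obtain ⟨d, rfl⟩ := Nat.exists_eq_add_of_le hsr
  have hzero {r s : ℕ} (hrs : ¬ (M : ℤ) ∣ 2 * (r - s)) : residueCount M b N r s = 0 :=
    not_not.1 (mt (dvd_two_mul_sub_of_residueCount_ne_zero hb hN) hrs)
  by_cases hd : (M : ℤ) ∣ 2 * d
  · refine residueCount_add_swap_le_of_dvd hab hbM (dvd_mul_of_dvd_two_mul hd fun hM ↦ ?_)
      (dvd_mul_of_dvd_two_mul hd fun hM ↦ ?_)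
    all_goals
      have hMe : Even M := mod_cast hM
      have haodd : Odd (a : ℤ) := mod_cast ha hMe
      have hbodd : Odd (b : ℤ) := mod_cast odd_of_coprime_of_even hb hMe
    · exact hbodd.sub_odd haodd
    · exact (hM.sub_odd haodd).sub_odd hbodd
  · rw [hzero (by simpa using hd), hzero (by simpa using hd)]
    exact Nat.zero_le _

end Comparison

theorem distinct_partition_inequality_mod_M_even_general {M a b : ℕ} (ha : 0 < a) (hab : a < b)
    (hbM : 2 * b < M) (haM : Even M → Odd a) (hcop : Nat.Coprime b M) {N : ℕ} (hN : M ∣ 2 * N)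
    (m : ℕ) :
    #{p : Nat.Partition N | p.parts.card = m ∧ p.parts.Nodup ∧
        ∀ x ∈ p.parts, x % M = b ∨ x % M = M - b} ≤
      #{p : Nat.Partition N | p.parts.card = m ∧ p.parts.Nodup ∧
        ∀ x ∈ p.parts, x % M = a ∨ x % M = M - a} := by
  rw [card_residue_partition_eq_sum ha (by omega), card_residue_partition_eq_sum (by omega) hbM]
  exact sum_antidiagonal_le_of_add_swap_le_s3 fun q _ ↦
    residueCount_add_swap_le hab hbM haM hcop hN q.1 q.2

theorem distinct_partition_inequality_mod_M_even (M a b : ℕ) (hM : 6 ≤ M) (hMe : Even M)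
    (ha : 1 ≤ a) (hab : a < b) (hb : 2 * b < M)
    (haM : Nat.Coprime a M) (hbM : Nat.Coprime b M)
    (n m : ℕ) (hm1 : 1 ≤ m) (hm2 : m ≤ M * n + M / 2) :
    (Finset.univ.filter (fun p : Nat.Partition (M * n + M / 2) =>
        Multiset.card p.parts = m ∧ p.parts.Nodup ∧
        ∀ x ∈ p.parts, x % M = a ∨ x % M = M - a)).card ≥
    (Finset.univ.filter (fun p : Nat.Partition (M * n + M / 2) =>
        Multiset.card p.parts = m ∧ p.parts.Nodup ∧
        ∀ x ∈ p.parts, x % M = b ∨ x % M = M - b)).card :=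
  distinct_partition_inequality_mod_M_even_general ha hab hb (odd_of_coprime_of_even haM) hbM
    ⟨2 * n + 1, by linear_combination Nat.two_mul_div_two_of_even hMe⟩ m
end

section
/- For every natural number n, the number of partitions of n into parts congruent to 1 or 4 modulo 5 is greater than or equal to the number of partitions of n into parts congruent to 2 or 3 modulo 5; that is, p_{1,5}(n) ≥ p_{2,5}(n). -/
/-!
Call `β` the number of parts congruent to `a` minus the number congruent to `-a`, modulo `m`.
Moving each part `≡ a` down by `a - 1` and each part `≡ -a` up by `a - 1` makes all parts `≡ ±1`
and preserves `β`. It lowers the sum by `(a - 1) β`, which for `β ≥ 0` is restored by adding that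
many ones; the image then has balance `a β` with respect to `±1`. A partition into parts `≡ ±r`
is treated with `a = r` or `a = m - r`, whichever makes `β` nonnegative. The balances `r β` and
`(m - r) β` of the two cases can agree only at multiples of `r`, so whenever the second is such a
multiple, we replace `m - 1` ones by one part `m - 1`. This lowers the balance by `m`, and all
collisions disappear because neither `r` nor `m - r` divides `m`.
-/

namespace Ehrenpreis

/-- All parts of the multiset are congruent to `±a` modulo `m`, encoded through the
representatives `a` and `m - a`, so `0 < a < m` is intended. -/
abbrev PartsPlusMinus (m a : ℕ) (s : Multiset ℕ) : Prop :=
  ∀ x ∈ s, x % m = a ∨ x % m = m - a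

/-- The sign `±1` with which `x` is congruent to `±a` modulo `m`, and `0` if there is none. -/
def signMod (m a x : ℕ) : ℤ :=
  if x % m = a then 1 else if x % m = m - a then -1 else 0

/-- The number of parts congruent to `a` modulo `m` minus the number congruent to `-a`; the
invariant from which the original partition is recovered. -/
def balance (m a : ℕ) (s : Multiset ℕ) : ℤ :=
  (s.map (signMod m a)).sum

/-- The shift of parts congruent to `±a` modulo `m` by `a - 1`, to parts congruent to `±1`. -/
def shift (m a x : ℕ) : ℕ :=
  if x % m = a then x - (a - 1) else x + (a - 1)

/-- The inverse of `shift`, on parts congruent to `±1` modulo `m`. -/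
def unshift (m a x : ℕ) : ℕ :=
  if x % m = 1 then x + (a - 1) else x - (a - 1)

/-- All parts shifted to the classes `±1`, with ones added to restore the sum. When the balance
is negative, no ones are added and the sum is not restored. -/
def shiftPad (m a : ℕ) (s : Multiset ℕ) : Multiset ℕ :=
  s.map (shift m a) + Multiset.replicate ((a - 1) * (balance m a s).toNat) 1

/-- Replaces `k` ones by a single part `k`; meaningful only if there are at least `k` ones. -/
def mergeOnes (k : ℕ) (s : Multiset ℕ) : Multiset ℕ :=
  k ::ₘ (s - Multiset.replicate k 1)

/-- The injection from partitions into parts `≡ ±r` to partitions into parts `≡ ±1`. -/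
def plusMinusMap (m r : ℕ) (s : Multiset ℕ) : Multiset ℕ :=
  if 0 ≤ balance m r s then shiftPad m r s
  else if (r : ℤ) ∣ m * balance m r s then mergeOnes (m - 1) (shiftPad m (m - r) s)
  else shiftPad m (m - r) s

/-- The balance with respect to `±1` of the image under `plusMinusMap` of a partition with
balance `β` with respect to `±r`. -/
def imageBalance (m r β : ℤ) : ℤ :=
  if 0 ≤ β then r * β
  else if r ∣ m * β then (m - r) * -β - m
  else (m - r) * -β

theorem PartsPlusMinus.neg {m a : ℕ} {s : Multiset ℕ} (ham : a < m)
    (hs : PartsPlusMinus m a s) : PartsPlusMinus m (m - a) s := fun x hx => by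
  rw [Nat.sub_sub_self ham.le]
  exact (hs x hx).symm

theorem PartsPlusMinus.pos_of_mem {m a x : ℕ} {s : Multiset ℕ} (ha : 0 < a) (ham : a < m)
    (hs : PartsPlusMinus m a s) (hx : x ∈ s) : 0 < x := by
  refine Nat.pos_of_ne_zero ?_
  rintro rfl
  have := hs 0 hx
  simp only [Nat.zero_mod] at this
  omega

theorem signMod_neg {m a : ℕ} (ham : a < m) (hne : 2 * a ≠ m) (x : ℕ) :
    signMod m (m - a) x = -signMod m a x := by
  unfold signMod
  split_ifs <;> omega

theorem balance_neg {m a : ℕ} (ham : a < m) (hne : 2 * a ≠ m) (s : Multiset ℕ) :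
    balance m (m - a) s = -balance m a s := by
  simp [balance, signMod_neg ham hne]

theorem balance_add (m a : ℕ) (s t : Multiset ℕ) :
    balance m a (s + t) = balance m a s + balance m a t := by
  simp [balance]

theorem balance_replicate_one {m : ℕ} (hm : 1 < m) (k : ℕ) :
    balance m 1 (Multiset.replicate k 1) = k := by
  simp [balance, signMod, Nat.mod_eq_of_lt hm]

theorem shift_mod_of_mod_eq {m a x : ℕ} (ha : 0 < a) (hm : 1 < m) (hx : x % m = a) :
    shift m a x % m = 1 := by
  have hdiv := Nat.div_add_mod x m
  have hshift : shift m a x = m * (x / m) + 1 := by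
    rw [shift, if_pos hx]
    omega
  rw [hshift, Nat.mul_add_mod, Nat.mod_eq_of_lt hm]

theorem shift_mod_of_mod_eq_neg {m a x : ℕ} (ha : 0 < a) (ham : a < m) (hne : 2 * a ≠ m)
    (hx : x % m = m - a) : shift m a x % m = m - 1 := by
  have hdiv := Nat.div_add_mod x m
  have hshift : shift m a x = m * (x / m) + (m - 1) := by
    rw [shift, if_neg (by omega)]
    omega
  rw [hshift, Nat.mul_add_mod, Nat.mod_eq_of_lt (by omega)]

theorem signMod_one_shift {m a x : ℕ} (ha : 0 < a) (ham : a < m) (hne : 2 * a ≠ m)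
    (hx : x % m = a ∨ x % m = m - a) : signMod m 1 (shift m a x) = signMod m a x := by
  rcases hx with hx | hx
  · simp [signMod, shift_mod_of_mod_eq ha (by omega) hx, hx]
  · have hm : m - 1 ≠ 1 := by omega
    have hma : m - a ≠ a := by omega
    simp [signMod, shift_mod_of_mod_eq_neg ha ham hne hx, hx, hm, hma]

theorem cast_shift {m a x : ℕ} (ha : 0 < a) (hx : x % m = a ∨ x % m = m - a) :
    (shift m a x : ℤ) = x - (a - 1) * signMod m a x := by
  have hle := Nat.mod_le x m
  unfold shift signMod
  split_ifs <;> omega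

theorem unshift_shift {m a x : ℕ} (ha : 0 < a) (ham : a < m) (hne : 2 * a ≠ m)
    (hx : x % m = a ∨ x % m = m - a) : unshift m a (shift m a x) = x := by
  have hle := Nat.mod_le x m
  rcases hx with hx | hx
  · rw [unshift, if_pos (shift_mod_of_mod_eq ha (by omega) hx), shift, if_pos hx]
    omega
  · rw [unshift, shift_mod_of_mod_eq_neg ha ham hne hx, if_neg (by omega), shift,
      if_neg (by omega), Nat.add_sub_cancel]

theorem balance_one_map_shift {m a : ℕ} {s : Multiset ℕ} (ha : 0 < a) (ham : a < m)
    (hne : 2 * a ≠ m) (hs : PartsPlusMinus m a s) :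
    balance m 1 (s.map (shift m a)) = balance m a s := by
  rw [balance, balance, Multiset.map_map]
  exact congrArg _ (Multiset.map_congr rfl fun x hx => signMod_one_shift ha ham hne (hs x hx))

theorem sum_map_shift {m a : ℕ} {s : Multiset ℕ} (ha : 0 < a) (hs : PartsPlusMinus m a s) :
    ((s.map (shift m a)).sum : ℤ) = s.sum - (a - 1) * balance m a s := by
  rw [Nat.cast_multiset_sum, Nat.cast_multiset_sum, Multiset.map_map, balance,
    ← Multiset.sum_map_mul_left, ← Multiset.sum_map_sub]
  exact congrArg _ (Multiset.map_congr rfl fun x hx => cast_shift ha (hs x hx))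

theorem map_unshift_map_shift {m a : ℕ} {s : Multiset ℕ} (ha : 0 < a) (ham : a < m)
    (hne : 2 * a ≠ m) (hs : PartsPlusMinus m a s) :
    (s.map (shift m a)).map (unshift m a) = s := by
  rw [Multiset.map_map]
  exact (Multiset.map_congr rfl fun x hx => unshift_shift ha ham hne (hs x hx)).trans
    (Multiset.map_id' s)

theorem PartsPlusMinus.shiftPad {m a : ℕ} {s : Multiset ℕ} (ha : 0 < a) (ham : a < m)
    (hne : 2 * a ≠ m) (hs : PartsPlusMinus m a s) : PartsPlusMinus m 1 (shiftPad m a s) := by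
  intro y hy
  rcases Multiset.mem_add.mp hy with hy | hy
  · obtain ⟨x, hx, rfl⟩ := Multiset.mem_map.mp hy
    exact (hs x hx).imp (shift_mod_of_mod_eq ha (by omega))
      (shift_mod_of_mod_eq_neg ha ham hne)
  · rw [Multiset.eq_of_mem_replicate hy]
    exact .inl (Nat.mod_eq_of_lt (by omega))

theorem sum_shiftPad {m a : ℕ} {s : Multiset ℕ} (ha : 0 < a) (hs : PartsPlusMinus m a s)
    (hβ : 0 ≤ balance m a s) : (shiftPad m a s).sum = s.sum := by
  rw [← Nat.cast_inj (R := ℤ), shiftPad, Multiset.sum_add, Multiset.sum_replicate, smul_eq_mul,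
    mul_one]
  push_cast [sum_map_shift ha hs, Int.toNat_of_nonneg hβ, Nat.cast_sub ha]
  ring

theorem balance_one_shiftPad {m a : ℕ} {s : Multiset ℕ} (ha : 0 < a) (ham : a < m)
    (hne : 2 * a ≠ m) (hs : PartsPlusMinus m a s) (hβ : 0 ≤ balance m a s) :
    balance m 1 (shiftPad m a s) = a * balance m a s := by
  rw [shiftPad, balance_add, balance_one_map_shift ha ham hne hs,
    balance_replicate_one (by omega)]
  push_cast [Int.toNat_of_nonneg hβ, Nat.cast_sub ha]
  ring

theorem eq_of_shiftPad_eq {m a : ℕ} {s t : Multiset ℕ} (ha : 0 < a) (ham : a < m)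
    (hne : 2 * a ≠ m) (hs : PartsPlusMinus m a s) (ht : PartsPlusMinus m a t)
    (hβ : balance m a s = balance m a t) (h : shiftPad m a s = shiftPad m a t) : s = t := by
  rw [shiftPad, shiftPad, hβ] at h
  rw [← map_unshift_map_shift ha ham hne hs, add_right_cancel h,
    map_unshift_map_shift ha ham hne ht]

theorem replicate_one_le_shiftPad {m a : ℕ} {s : Multiset ℕ} (hma : m < 2 * a)
    (hβ : 2 ≤ balance m a s) : Multiset.replicate (m - 1) 1 ≤ shiftPad m a s := by
  have hones : m - 1 ≤ (a - 1) * (balance m a s).toNat :=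
    calc m - 1 ≤ (a - 1) * 2 := by omega
      _ ≤ (a - 1) * (balance m a s).toNat := Nat.mul_le_mul_left _ (by omega)
  exact (Multiset.replicate_mono 1 hones).trans (Multiset.le_add_left _ _)

theorem mergeOnes_add_replicate {k : ℕ} {s : Multiset ℕ} (h : Multiset.replicate k 1 ≤ s) :
    mergeOnes k s + Multiset.replicate k 1 = k ::ₘ s := by
  rw [mergeOnes, Multiset.cons_add, tsub_add_cancel_of_le h]

theorem sum_mergeOnes {k : ℕ} {s : Multiset ℕ} (h : Multiset.replicate k 1 ≤ s) :
    (mergeOnes k s).sum = s.sum := by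
  have hsum := congrArg Multiset.sum (mergeOnes_add_replicate h)
  simp only [Multiset.sum_add, Multiset.sum_replicate, Multiset.sum_cons, smul_eq_mul] at hsum
  omega

theorem balance_one_mergeOnes {m : ℕ} {s : Multiset ℕ} (hm : 2 < m)
    (h : Multiset.replicate (m - 1) 1 ≤ s) :
    balance m 1 (mergeOnes (m - 1) s) = balance m 1 s - m := by
  have hsign : signMod m 1 (m - 1) = -1 := by
    rw [signMod, Nat.mod_eq_of_lt (by omega), if_neg (by omega), if_pos rfl]
  have hbal := congrArg (balance m 1) (mergeOnes_add_replicate h)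
  rw [balance_add, balance_replicate_one (by omega), ← Multiset.singleton_add, balance_add,
    balance, balance, Multiset.map_singleton, Multiset.sum_singleton, hsign] at hbal
  rw [balance]
  omega

theorem PartsPlusMinus.mergeOnes {m : ℕ} {s : Multiset ℕ} (hm : 0 < m)
    (hs : PartsPlusMinus m 1 s) : PartsPlusMinus m 1 (mergeOnes (m - 1) s) := by
  intro x hx
  rcases Multiset.mem_cons.mp hx with rfl | hx
  · exact .inr (Nat.mod_eq_of_lt (by omega))
  · exact hs x (Multiset.mem_of_le tsub_le_self hx)

theorem mergeOnes_inj {k : ℕ} {s t : Multiset ℕ} (hs : Multiset.replicate k 1 ≤ s)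
    (ht : Multiset.replicate k 1 ≤ t) : mergeOnes k s = mergeOnes k t ↔ s = t := by
  rw [← add_left_inj (Multiset.replicate k 1), mergeOnes_add_replicate hs,
    mergeOnes_add_replicate ht, Multiset.cons_inj_right]

theorem dvd_imageBalance_iff {m r β : ℤ} (hrm : ¬ r ∣ m) :
    r ∣ imageBalance m r β ↔ 0 ≤ β := by
  have hmod : (m - r) * -β = r * β - m * β := by ring
  rw [imageBalance]
  split_ifs with hβ hdvd
  · simp [hβ]
  · rw [hmod, iff_false_right hβ, dvd_sub_right ((dvd_mul_right r β).sub hdvd)]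
    exact hrm
  · rw [hmod, iff_false_right hβ, dvd_sub_right (dvd_mul_right r β)]
    exact hdvd

theorem imageBalance_injective {m r : ℤ} (hr : 0 < r) (h2r : 2 * r < m) (hrm : ¬ r ∣ m) :
    Function.Injective (imageBalance m r) := by
  have hmr : m - r ≠ 0 := by omega
  have hndvd : ¬ (m - r) ∣ m := fun h => by
    have := Int.le_of_dvd hr ((dvd_sub_right h).mp (dvd_refl (m - r)))
    omega
  intro β γ h
  have hsign : 0 ≤ β ↔ 0 ≤ γ := by
    rw [← dvd_imageBalance_iff hrm, h, dvd_imageBalance_iff hrm]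
  unfold imageBalance at h
  split_ifs at h
  any_goals tauto
  · exact mul_left_cancel₀ hr.ne' h
  · exact neg_injective (mul_left_cancel₀ hmr (sub_left_injective h))
  · exact absurd ⟨-β - -γ, by linear_combination -h⟩ hndvd
  · exact absurd ⟨-γ - -β, by linear_combination h⟩ hndvd
  · exact neg_injective (mul_left_cancel₀ hmr h)

theorem two_le_neg_of_dvd_mul {m r β : ℤ} (hrm : ¬ r ∣ m) (hβ : ¬ 0 ≤ β) (hdvd : r ∣ m * β) :
    2 ≤ -β := by
  have hβ' : β ≠ -1 := by
    rintro rfl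
    exact hrm (by simpa using hdvd)
  omega

theorem replicate_one_le_shiftPad_neg {m r : ℕ} {s : Multiset ℕ} (hr : 0 < r) (h2r : 2 * r < m)
    (hrm : ¬ r ∣ m) (hβ : ¬ 0 ≤ balance m r s) (hdvd : (r : ℤ) ∣ m * balance m r s) :
    Multiset.replicate (m - 1) 1 ≤ shiftPad m (m - r) s := by
  refine replicate_one_le_shiftPad (by omega) ?_
  rw [balance_neg (by omega) h2r.ne]
  exact two_le_neg_of_dvd_mul (by exact_mod_cast hrm) hβ hdvd

theorem PartsPlusMinus.plusMinusMap {m r : ℕ} {s : Multiset ℕ} (hr : 0 < r) (h2r : 2 * r < m)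
    (hs : PartsPlusMinus m r s) : PartsPlusMinus m 1 (plusMinusMap m r s) := by
  have hpad_neg : PartsPlusMinus m 1 (Ehrenpreis.shiftPad m (m - r) s) :=
    (hs.neg (by omega)).shiftPad (by omega) (by omega) (by omega)
  rw [Ehrenpreis.plusMinusMap]
  split_ifs
  · exact hs.shiftPad hr (by omega) h2r.ne
  · exact hpad_neg.mergeOnes (by omega)
  · exact hpad_neg

theorem sum_plusMinusMap {m r : ℕ} {s : Multiset ℕ} (hr : 0 < r) (h2r : 2 * r < m)
    (hrm : ¬ r ∣ m) (hs : PartsPlusMinus m r s) : (plusMinusMap m r s).sum = s.sum := by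
  have hsum_neg (hβ : ¬ 0 ≤ balance m r s) : (shiftPad m (m - r) s).sum = s.sum := by
    refine sum_shiftPad (by omega) (hs.neg (by omega)) ?_
    rw [balance_neg (by omega) h2r.ne]
    omega
  rw [plusMinusMap]
  split_ifs with hβ hdvd
  · exact sum_shiftPad hr hs hβ
  · rw [sum_mergeOnes (replicate_one_le_shiftPad_neg hr h2r hrm hβ hdvd), hsum_neg hβ]
  · exact hsum_neg hβ

theorem balance_one_plusMinusMap {m r : ℕ} {s : Multiset ℕ} (hr : 0 < r) (h2r : 2 * r < m)
    (hrm : ¬ r ∣ m) (hs : PartsPlusMinus m r s) :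
    balance m 1 (plusMinusMap m r s) = imageBalance m r (balance m r s) := by
  have hneg := balance_neg (by omega) h2r.ne s
  have hbal_neg (hβ : ¬ 0 ≤ balance m r s) :
      balance m 1 (shiftPad m (m - r) s) = (m - r) * -balance m r s := by
    rw [balance_one_shiftPad (by omega) (by omega) (by omega) (hs.neg (by omega)) (by omega),
      hneg, Nat.cast_sub (by omega)]
  rw [plusMinusMap, imageBalance]
  split_ifs with hβ hdvd
  · exact balance_one_shiftPad hr (by omega) h2r.ne hs hβ
  · rw [balance_one_mergeOnes (by omega) (replicate_one_le_shiftPad_neg hr h2r hrm hβ hdvd),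
      hbal_neg hβ]
  · exact hbal_neg hβ

theorem plusMinusMap_injOn {m r : ℕ} (hr : 0 < r) (h2r : 2 * r < m) (hrm : ¬ r ∣ m) :
    Set.InjOn (plusMinusMap m r) {s | PartsPlusMinus m r s} := by
  intro s hs t ht h
  have hβ : balance m r s = balance m r t := by
    refine imageBalance_injective (m := m) (r := r) (by omega) (by omega)
      (by exact_mod_cast hrm) ?_
    rw [← balance_one_plusMinusMap hr h2r hrm hs, h, balance_one_plusMinusMap hr h2r hrm ht]
  have eq_of_neg : shiftPad m (m - r) s = shiftPad m (m - r) t → s = t := by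
    refine eq_of_shiftPad_eq (by omega) (by omega) (by omega) (hs.neg (by omega))
      (ht.neg (by omega)) ?_
    rw [balance_neg (by omega) h2r.ne, balance_neg (by omega) h2r.ne, hβ]
  rw [plusMinusMap, plusMinusMap, ← hβ] at h
  split_ifs at h with hsign hdvd
  · exact eq_of_shiftPad_eq hr (by omega) h2r.ne hs ht hβ h
  · refine eq_of_neg ((mergeOnes_inj ?_ ?_).mp h)
    · exact replicate_one_le_shiftPad_neg hr h2r hrm hsign hdvd
    · rw [hβ] at hsign hdvd
      exact replicate_one_le_shiftPad_neg hr h2r hrm hsign hdvd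
  · exact eq_of_neg h

theorem card_partition_le_of_injOn {P Q : Multiset ℕ → Prop} [DecidablePred P] [DecidablePred Q]
    (f : Multiset ℕ → Multiset ℕ) (hf : Set.MapsTo f {s | P s} {s | Q s})
    (hinj : Set.InjOn f {s | P s}) (hsum : ∀ s, P s → (f s).sum = s.sum)
    (hpos : ∀ s, Q s → ∀ x ∈ s, 0 < x) (n : ℕ) :
    (Finset.univ.filter fun p : Nat.Partition n => P p.parts).card ≤
      (Finset.univ.filter fun p : Nat.Partition n => Q p.parts).card := by
  rw [← Fintype.card_subtype, ← Fintype.card_subtype]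
  let g (p : {p : Nat.Partition n // P p.parts}) : {p : Nat.Partition n // Q p.parts} :=
    ⟨⟨f p.1.parts, fun hx => hpos _ (hf p.2) _ hx, (hsum _ p.2).trans p.1.parts_sum⟩, hf p.2⟩
  refine Fintype.card_le_of_injective g fun p q h => Subtype.ext (Nat.Partition.ext ?_)
  exact hinj p.2 q.2 (congrArg (fun p => p.1.parts) h)

end Ehrenpreis

open Ehrenpreis in
theorem ehrenpreis_inequality_general {m r : ℕ} (hr : 0 < r) (h2r : 2 * r < m) (hrm : ¬ r ∣ m)
    (n : ℕ) :
    (Finset.univ.filter (fun p : Nat.Partition n =>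
        ∀ x ∈ p.parts, x % m = 1 ∨ x % m = m - 1)).card ≥
    (Finset.univ.filter (fun p : Nat.Partition n =>
        ∀ x ∈ p.parts, x % m = r ∨ x % m = m - r)).card :=
  card_partition_le_of_injOn (P := PartsPlusMinus m r) (Q := PartsPlusMinus m 1)
    (plusMinusMap m r) (fun _ hs => hs.plusMinusMap hr h2r) (plusMinusMap_injOn hr h2r hrm)
    (fun _ hs => sum_plusMinusMap hr h2r hrm hs)
    (fun _ hs _ hx => hs.pos_of_mem one_pos (by omega) hx) n

theorem ehrenpreis_inequality (n : ℕ) :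
    (Finset.univ.filter (fun p : Nat.Partition n =>
        ∀ x ∈ p.parts, x % 5 = 1 ∨ x % 5 = 4)).card ≥
    (Finset.univ.filter (fun p : Nat.Partition n =>
        ∀ x ∈ p.parts, x % 5 = 2 ∨ x % 5 = 3)).card :=
  ehrenpreis_inequality_general (m := 5) (r := 2) (by decide) (by decide) (by decide) n
end

section
/- For every natural number n, the difference p_{1,5}(n) − p_{2,5}(n) equals the sum over all integers k ≥ 1 with k² ≤ n of the number of partitions of n − k² into parts each of size at most k − 1. (Equivalently, 1/(q,q^4;q^5)_∞ − 1/(q^2,q^3;q^5)_∞ = Σ_{k≥1} q^{k²}/(q;q)_{k−1} as an identity of coefficients; in particular the k = 1 term contributes 1 exactly when n = 1.) -/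
/-!
Write `(q)_k` for `(q; q)_k` and `f(a, b) = ∑ a ^ (l (l + 1) / 2) * b ^ (l (l - 1) / 2)`, summed
over all integers `l`, for Ramanujan's theta function. The finite Jacobi triple product at
`(-1, -q)` says that the sequences `thetaTerm (-1) (-q)` and `(1, 0, 0, …)` form a Bailey pair.
Bailey's lemma multiplies the first sequence by `q ^ (l (l + a))` and replaces the second by
`1 / (q)_n`; a second application, followed by a passage to the limit, gives for `a = 0, 1`
`(q)_∞ * ∑ q ^ (s (s + a)) / (q)_s = f(-q ^ (2 + 2 a), -q ^ (3 - 2 a))`.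
The Jacobi triple product factors the right-hand side; dividing by `(q)_∞`, dissected modulo 5,
leaves the generating function of the partitions into parts `≡ ±(1 + a)` modulo 5. These are the
two Rogers–Ramanujan identities, and subtracting them termwise turns
`q ^ (s ^ 2) * (1 - q ^ s) / (q)_s` into `q ^ (s ^ 2) / (q)_(s - 1)`.
-/

namespace RogersRamanujan

open Finset Filter PowerSeries
open scoped Topology PowerSeries.WithPiTopology

section Algebra

variable {R : Type*} [CommRing R] {q : R}

/-- The `q`-Pochhammer symbol `(a; q)_n`. -/
def qPochhammer (a q : R) (n : ℕ) : R := ∏ i ∈ range n, (1 - a * q ^ i)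

lemma qPochhammer_zero (a q : R) : qPochhammer a q 0 = 1 := rfl

lemma qPochhammer_succ (a q : R) (n : ℕ) :
    qPochhammer a q (n + 1) = qPochhammer a q n * (1 - a * q ^ n) :=
  prod_range_succ _ n

lemma isUnit_qPochhammer_self (hq : ∀ n : ℕ, IsUnit (1 - q ^ (n + 1))) (n : ℕ) :
    IsUnit (qPochhammer q q n) := by
  refine Finset.prod_induction _ _ (fun _ _ => IsUnit.mul) isUnit_one fun i _ => ?_
  simpa only [pow_succ'] using hq i

lemma qPochhammer_one_eq_zero (q : R) {n : ℕ} (hn : n ≠ 0) : qPochhammer 1 q n = 0 :=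
  prod_eq_zero (mem_range.2 (Nat.pos_of_ne_zero hn)) (by simp)

/-- The reciprocal `1 / (q; q)_k`, with the usual convention that it is `0` for negative `k`.
It is only meaningful when `(q; q)_k` is a unit, as `Ring.inverse` is `0` on non-units. -/
noncomputable def qPochhammerInv (q : R) : ℤ → R
  | Int.ofNat n => Ring.inverse (qPochhammer q q n)
  | Int.negSucc _ => 0

lemma qPochhammerInv_of_neg (q : R) : ∀ {k : ℤ}, k < 0 → qPochhammerInv q k = 0
  | Int.negSucc _, _ => rfl

lemma qPochhammerInv_zero (q : R) : qPochhammerInv q 0 = 1 :=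
  Ring.inverse_one R

lemma qPochhammerInv_mul_qPochhammer (hq : ∀ n : ℕ, IsUnit (1 - q ^ (n + 1))) (n : ℕ) :
    qPochhammerInv q n * qPochhammer q q n = 1 :=
  Ring.inverse_mul_cancel _ (isUnit_qPochhammer_self hq n)

lemma qPochhammerInv_sub_one (hq : ∀ n : ℕ, IsUnit (1 - q ^ (n + 1))) (k : ℤ) :
    qPochhammerInv q (k - 1) = (1 - q ^ k.toNat) * qPochhammerInv q k := by
  obtain hk | ⟨n, rfl⟩ : k ≤ 0 ∨ ∃ n : ℕ, k = n + 1 := by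
    obtain hk | hk := le_or_gt k 0
    exacts [.inl hk, .inr ⟨(k - 1).toNat, by omega⟩]
  · simp [Int.toNat_of_nonpos hk, qPochhammerInv_of_neg q (by omega : k - 1 < 0)]
  · have h₁ := qPochhammerInv_mul_qPochhammer hq n
    have h₂ := qPochhammerInv_mul_qPochhammer hq (n + 1)
    rw [qPochhammer_succ, ← pow_succ'] at h₂
    rw [add_sub_cancel_right, show ((n : ℤ) + 1).toNat = n + 1 by omega]
    push_cast at h₂
    linear_combination (1 - q ^ (n + 1)) * qPochhammerInv q (n + 1) * h₁ - qPochhammerInv q n * h₂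

/-- The `q`-Pascal rule `1 - q ^ (i + k) = (1 - q ^ k) + q ^ k * (1 - q ^ i)` in summed form. -/
lemma one_sub_pow_mul_sum_antidiagonal (hq : ∀ n : ℕ, IsUnit (1 - q ^ (n + 1)))
    (f : ℕ → ℕ → R) (N : ℕ) :
    (1 - q ^ (N + 1)) * ∑ p ∈ antidiagonal (N + 1),
        f p.1 p.2 * (qPochhammerInv q p.1 * qPochhammerInv q p.2) =
      ∑ p ∈ antidiagonal N, (f p.1 (p.2 + 1) + q ^ p.2 * f (p.1 + 1) p.2) *
        (qPochhammerInv q p.1 * qPochhammerInv q p.2) := by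
  have split : ∀ p ∈ antidiagonal (N + 1),
      (1 - q ^ (N + 1)) * (f p.1 p.2 * (qPochhammerInv q p.1 * qPochhammerInv q p.2)) =
        f p.1 p.2 * (qPochhammerInv q p.1 * qPochhammerInv q (p.2 - 1)) +
        q ^ p.2 * f p.1 p.2 * (qPochhammerInv q (p.1 - 1) * qPochhammerInv q p.2) := by
    intro p hp
    rw [← mem_antidiagonal.1 hp, qPochhammerInv_sub_one hq, qPochhammerInv_sub_one hq]
    simp only [Int.toNat_natCast]
    ring
  rw [mul_sum, sum_congr rfl split, sum_add_distrib, Nat.sum_antidiagonal_succ',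
    Nat.sum_antidiagonal_succ]
  simp [qPochhammerInv_of_neg, add_mul, sum_add_distrib]

lemma mul_add_nonneg_of_le_one {a : ℕ} (ha : a ≤ 1) (l : ℤ) : 0 ≤ l * (l + a) := by
  obtain h | h := le_or_gt 0 l <;> nlinarith

/-- The triangular number `l (l + 1) / 2`, which is a natural number for every integer `l`. -/
def triangle (l : ℤ) : ℕ := (l * (l + 1) / 2).toNat

lemma two_mul_triangle (l : ℤ) : (2 * triangle l : ℤ) = l * (l + 1) := by
  have nonneg : 0 ≤ l * (l + 1) := by simpa using mul_add_nonneg_of_le_one le_rfl l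
  rw [triangle, Int.toNat_of_nonneg (by positivity),
    Int.mul_ediv_cancel' (Int.even_mul_succ_self l).two_dvd]

/-- The general term `a ^ (l (l + 1) / 2) * b ^ (l (l - 1) / 2)` of Ramanujan's theta function
`f(a, b)`. -/
def thetaTerm (a b : R) (l : ℤ) : R := a ^ triangle l * b ^ triangle (-l)

lemma thetaTerm_zero (a b : R) : thetaTerm a b 0 = 1 := by simp [thetaTerm, triangle]

lemma thetaTerm_neg (a b : R) (l : ℤ) : thetaTerm a b (-l) = thetaTerm b a l := by
  simp [thetaTerm, mul_comm]

lemma pow_mul_thetaTerm_add_one (a b : R) {n k : ℕ} {l : ℤ} (h : k + l = n) :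
    (a * b) ^ k * thetaTerm a b (l + 1) = a * (a * b) ^ n * thetaTerm a b l := by
  have ha : triangle (l + 1) + k = triangle l + n + 1 := by
    zify; linarith [two_mul_triangle l, two_mul_triangle (l + 1)]
  have hb : triangle (-(l + 1)) + k = triangle (-l) + n := by
    zify; linarith [two_mul_triangle (-l), two_mul_triangle (-(l + 1))]
  calc (a * b) ^ k * thetaTerm a b (l + 1)
      = a ^ (triangle (l + 1) + k) * b ^ (triangle (-(l + 1)) + k) := by rw [thetaTerm]; ring
    _ = a * (a * b) ^ n * thetaTerm a b l := by rw [ha, hb, thetaTerm]; ring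

lemma sum_antidiagonal_thetaTerm_succ (a b : R) (hq : ∀ n : ℕ, IsUnit (1 - (a * b) ^ (n + 1)))
    (m n : ℕ) :
    (1 - (a * b) ^ (m + n + 1)) * ∑ p ∈ antidiagonal (m + n + 1), thetaTerm a b (p.1 - m) *
        (qPochhammerInv (a * b) p.1 * qPochhammerInv (a * b) p.2) =
      (1 + a * (a * b) ^ n) * ∑ p ∈ antidiagonal (m + n), thetaTerm a b (p.1 - m) *
        (qPochhammerInv (a * b) p.1 * qPochhammerInv (a * b) p.2) := by
  rw [one_sub_pow_mul_sum_antidiagonal hq (fun i _ => thetaTerm a b (i - m)), mul_sum]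
  refine sum_congr rfl fun p hp => ?_
  have hp : (p.2 : ℤ) + (p.1 - m) = n := by
    have := mem_antidiagonal.1 hp
    omega
  have ratio := pow_mul_thetaTerm_add_one a b hp
  rw [Nat.cast_add_one, show (p.1 : ℤ) + 1 - m = p.1 - m + 1 by ring]
  linear_combination (qPochhammerInv (a * b) p.1 * qPochhammerInv (a * b) p.2) * ratio

lemma sum_antidiagonal_thetaTerm_swap (a b : R) (m n : ℕ) :
    ∑ p ∈ antidiagonal (m + n), thetaTerm a b (p.1 - m) *
        (qPochhammerInv (a * b) p.1 * qPochhammerInv (a * b) p.2) =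
      ∑ p ∈ antidiagonal (n + m), thetaTerm b a (p.1 - n) *
        (qPochhammerInv (b * a) p.1 * qPochhammerInv (b * a) p.2) := by
  rw [← Nat.sum_antidiagonal_swap, add_comm n m, mul_comm b a]
  refine sum_congr rfl fun p hp => ?_
  have hp : (p.2 : ℤ) - m = -(p.1 - n) := by
    have := mem_antidiagonal.1 hp
    omega
  rw [Prod.fst_swap, Prod.snd_swap, hp, thetaTerm_neg, mul_comm (qPochhammerInv _ _)]

lemma sum_antidiagonal_thetaTerm (a b : R) (hq : ∀ n : ℕ, IsUnit (1 - (a * b) ^ (n + 1)))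
    (m n : ℕ) :
    ∑ p ∈ antidiagonal (m + n), thetaTerm a b (p.1 - m) *
        (qPochhammerInv (a * b) p.1 * qPochhammerInv (a * b) p.2) =
      qPochhammerInv (a * b) (m + n : ℕ) *
        (qPochhammer (-a) (a * b) n * qPochhammer (-b) (a * b) m) := by
  have cancel (N : ℕ) : qPochhammerInv (a * b) N =
      (1 - (a * b) ^ (N + 1)) * qPochhammerInv (a * b) (N + 1 : ℕ) := by
    simpa using qPochhammerInv_sub_one hq (N + 1 : ℕ)
  induction n with
  | zero =>
    induction m with
    | zero => simp [thetaTerm_zero, qPochhammerInv_zero, qPochhammer_zero]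
    | succ m ih =>
      have step := sum_antidiagonal_thetaTerm_succ b a (by simpa only [mul_comm b a] using hq) 0 m
      rw [add_assoc, ← sum_antidiagonal_thetaTerm_swap a b, ← sum_antidiagonal_thetaTerm_swap a b,
        ih, zero_add, add_zero, mul_comm b a, cancel] at step
      apply (hq m).mul_left_cancel
      rw [qPochhammer_succ]
      linear_combination step
  | succ n ih =>
    have step := sum_antidiagonal_thetaTerm_succ a b hq m n
    rw [ih, cancel] at step
    apply (hq (m + n)).mul_left_cancel
    rw [qPochhammer_succ, ← add_assoc]
    linear_combination step

lemma sum_antidiagonal_eq_sum_Icc {M : Type*} [AddCommMonoid M] (F : ℤ → ℤ → M) (m n : ℕ) :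
    ∑ p ∈ antidiagonal (m + n), F p.1 p.2 = ∑ l ∈ Icc (-m : ℤ) n, F (m + l) (n - l) := by
  refine sum_bij' (fun p _ => (p.1 - m : ℤ)) (fun l _ => ((m + l).toNat, (n - l).toNat))
    ?_ ?_ ?_ ?_ ?_
  all_goals simp only [HasAntidiagonal.mem_antidiagonal, mem_Icc, Prod.forall, Prod.mk.injEq]
  · omega
  · omega
  · omega
  · omega
  · intro i j h
    congr 1 <;> omega

theorem finite_jacobi_tripleProduct (a b : R) (hq : ∀ n : ℕ, IsUnit (1 - (a * b) ^ (n + 1)))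
    (m n : ℕ) :
    ∑ l ∈ Icc (-m : ℤ) n, thetaTerm a b l *
        (qPochhammerInv (a * b) (m + l) * qPochhammerInv (a * b) (n - l)) =
      qPochhammerInv (a * b) (m + n : ℕ) *
        (qPochhammer (-a) (a * b) n * qPochhammer (-b) (a * b) m) := by
  rw [← sum_antidiagonal_thetaTerm a b hq, sum_antidiagonal_eq_sum_Icc fun i j =>
    thetaTerm a b (i - m) * (qPochhammerInv (a * b) i * qPochhammerInv (a * b) j)]
  simp only [add_sub_cancel_left]

/-- A form of the `q`-Chu–Vandermonde sum, counting by Durfee rectangles. -/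
lemma sum_antidiagonal_durfee (hq : ∀ n : ℕ, IsUnit (1 - q ^ (n + 1))) (L a : ℕ) :
    ∑ p ∈ antidiagonal L, q ^ (p.2 * (p.2 + a)) * qPochhammerInv q (p.2 + a : ℕ) *
        (qPochhammerInv q p.1 * qPochhammerInv q p.2) =
      qPochhammerInv q L * qPochhammerInv q (L + a : ℕ) := by
  induction L generalizing a with
  | zero => simp [qPochhammerInv_zero]
  | succ L ih =>
    apply (hq L).mul_left_cancel
    rw [one_sub_pow_mul_sum_antidiagonal hq
      (fun _ t => q ^ (t * (t + a)) * qPochhammerInv q (t + a : ℕ))]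
    have h := ih (a + 1)
    have h₂ := qPochhammerInv_sub_one hq (L + 1)
    rw [add_sub_cancel_right, show ((L : ℤ) + 1).toNat = L + 1 by omega] at h₂
    push_cast
    rw [← mul_assoc, ← h₂, show (L + 1 + a : ℤ) = (L + (a + 1) : ℕ) by push_cast; ring, ← h]
    refine sum_congr rfl fun p _ => ?_
    have h₃ := qPochhammerInv_sub_one hq (p.2 + a + 1)
    rw [add_sub_cancel_right, show ((p.2 : ℤ) + a + 1).toNat = p.2 + a + 1 by omega] at h₃
    rw [h₃]
    push_cast
    ring_nf

lemma sum_antidiagonal_durfee_nat (hq : ∀ n : ℕ, IsUnit (1 - q ^ (n + 1))) (N a l : ℕ) :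
    ∑ p ∈ antidiagonal N, q ^ (p.2 * (p.2 + a)) * qPochhammerInv q p.1 *
        (qPochhammerInv q (p.2 + a + l) * qPochhammerInv q (p.2 - l)) =
      q ^ (l * (l + a)) * (qPochhammerInv q (N + a + l) * qPochhammerInv q (N - l)) := by
  have vanish {n : ℕ} (hn : n < l) : qPochhammerInv q (n - l) = 0 :=
    qPochhammerInv_of_neg q (by omega)
  obtain hN | ⟨L, rfl⟩ : N < l ∨ ∃ L, N = L + l :=
    (lt_or_ge N l).imp_right fun h => ⟨N - l, by omega⟩
  · rw [vanish hN, mul_zero, mul_zero]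
    refine sum_eq_zero fun p hp => ?_
    rw [vanish ((HasAntidiagonal.antidiagonal.snd_le hp).trans_lt hN), mul_zero, mul_zero]
  have support : ∀ p ∈ antidiagonal (L + l), q ^ (p.2 * (p.2 + a)) * qPochhammerInv q p.1 *
      (qPochhammerInv q (p.2 + a + l) * qPochhammerInv q (p.2 - l)) ≠ 0 → l ≤ p.2 := by
    intro p _ hp
    contrapose! hp
    rw [vanish hp, mul_zero, mul_zero]
  have durfee := sum_antidiagonal_durfee hq L (a + 2 * l)
  rw [← sum_filter_of_ne support, Nat.antidiagonal_filter_le_snd_of_le (Nat.le_add_left l L),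
    Nat.add_sub_cancel, sum_map, show ((L + l : ℕ) : ℤ) + a + l = (L + (a + 2 * l) : ℕ) by grind,
    show ((L + l : ℕ) : ℤ) - l = L by grind, mul_comm (qPochhammerInv q _), ← durfee, mul_sum]
  refine sum_congr rfl fun p _ => ?_
  change q ^ ((p.2 + l) * (p.2 + l + a)) * qPochhammerInv q p.1 *
    (qPochhammerInv q ((p.2 + l : ℕ) + a + l) * qPochhammerInv q ((p.2 + l : ℕ) - l)) = _
  rw [show ((p.2 + l : ℕ) : ℤ) + a + l = (p.2 + (a + 2 * l) : ℕ) by grind,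
    show ((p.2 + l : ℕ) : ℤ) - l = p.2 by grind]
  ring

lemma sum_antidiagonal_durfee_int (hq : ∀ n : ℕ, IsUnit (1 - q ^ (n + 1))) (N a : ℕ) {l : ℤ}
    (hl : 0 ≤ l * (l + a)) :
    ∑ p ∈ antidiagonal N, q ^ (p.2 * (p.2 + a)) * qPochhammerInv q p.1 *
        (qPochhammerInv q (p.2 + a + l) * qPochhammerInv q (p.2 - l)) =
      q ^ (l * (l + a)).toNat * (qPochhammerInv q (N + a + l) * qPochhammerInv q (N - l)) := by
  -- Both sides are invariant under `l ↦ -l - a`.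
  wlog h0 : 0 ≤ l generalizing l
  · have reflected := this (l := -l - a) (by linarith) (by nlinarith)
    rw [show (-l - a) * (-l - a + a) = l * (l + a) by ring] at reflected
    have fst (n : ℕ) : (n : ℤ) + a + (-l - a) = n - l := by ring
    have snd (n : ℕ) : (n : ℤ) - (-l - a) = n + a + l := by ring
    simpa only [fst, snd, mul_comm (qPochhammerInv q (_ - l))] using reflected
  lift l to ℕ using h0
  rw [sum_antidiagonal_durfee_nat hq, show ((l : ℤ) * (l + a)).toNat = l * (l + a) by norm_cast]

/-- `(α, β)` is a (bilateral) Bailey pair relative to `q ^ a`: symmetrising the sequence `α` under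
`l ↦ -l - a` gives the usual unilateral one. -/
def IsBaileyPair (q : R) (a : ℕ) (α : ℤ → R) (β : ℕ → R) : Prop :=
  ∀ n : ℕ, β n = ∑ l ∈ Icc (-(n + a : ℤ)) n,
    α l * (qPochhammerInv q (n + a + l) * qPochhammerInv q (n - l))

lemma IsBaileyPair.eq_sum_of_le {a : ℕ} {α : ℤ → R} {β : ℕ → R} (h : IsBaileyPair q a α β)
    {n N : ℕ} (hn : n ≤ N) :
    β n = ∑ l ∈ Icc (-(N + a : ℤ)) N,
      α l * (qPochhammerInv q (n + a + l) * qPochhammerInv q (n - l)) := by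
  rw [h n]
  refine sum_subset (Icc_subset_Icc (by omega) (by omega)) fun l _ hl => ?_
  obtain hl | hl : (n : ℤ) + a + l < 0 ∨ (n : ℤ) - l < 0 := by
    rw [mem_Icc] at hl
    omega
  · rw [qPochhammerInv_of_neg q hl, zero_mul, mul_zero]
  · rw [qPochhammerInv_of_neg q hl, mul_zero, mul_zero]

theorem IsBaileyPair.bailey_lemma (hq : ∀ n : ℕ, IsUnit (1 - q ^ (n + 1))) {a : ℕ} (ha : a ≤ 1)
    {α : ℤ → R} {β : ℕ → R} (h : IsBaileyPair q a α β) :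
    IsBaileyPair q a (fun l => q ^ (l * (l + a)).toNat * α l) fun N =>
      ∑ p ∈ antidiagonal N, q ^ (p.2 * (p.2 + a)) * qPochhammerInv q p.1 * β p.2 := by
  intro N
  calc ∑ p ∈ antidiagonal N, q ^ (p.2 * (p.2 + a)) * qPochhammerInv q p.1 * β p.2
      = ∑ p ∈ antidiagonal N, ∑ l ∈ Icc (-(N + a : ℤ)) N, α l *
          (q ^ (p.2 * (p.2 + a)) * qPochhammerInv q p.1 *
            (qPochhammerInv q (p.2 + a + l) * qPochhammerInv q (p.2 - l))) := by
        refine sum_congr rfl fun p hp => ?_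
        rw [h.eq_sum_of_le (HasAntidiagonal.antidiagonal.snd_le hp), mul_sum]
        exact sum_congr rfl fun l _ => by ring
    _ = _ := by
        rw [sum_comm]
        refine sum_congr rfl fun l _ => ?_
        rw [← mul_sum, sum_antidiagonal_durfee_int hq N a (mul_add_nonneg_of_le_one ha l)]
        ring

lemma isBaileyPair_unit (hq : ∀ n : ℕ, IsUnit (1 - q ^ (n + 1))) (a : ℕ) :
    IsBaileyPair q a (thetaTerm (-1) (-q)) (Pi.single 0 1) := by
  intro n
  have jtp := finite_jacobi_tripleProduct (-1) (-q) (by simpa using hq) (n + a) n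
  simp only [neg_mul_neg, one_mul, neg_neg, Nat.cast_add] at jtp
  rw [jtp]
  obtain rfl | hn := eq_or_ne n 0
  · simp [qPochhammer_zero, qPochhammerInv_mul_qPochhammer hq]
  · rw [qPochhammer_one_eq_zero q hn, Pi.single_eq_of_ne hn, zero_mul, mul_zero]

lemma pow_mul_thetaTerm_neg_one (q : R) {a : ℕ} (ha : a ≤ 1) (l : ℤ) :
    q ^ (l * (l + a)).toNat * (q ^ (l * (l + a)).toNat * thetaTerm (-1) (-q) l) =
      thetaTerm (-q ^ (2 + 2 * a)) (-q ^ (3 - 2 * a)) l := by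
  have exponent : 2 * (l * (l + a)).toNat + triangle (-l) =
      (2 + 2 * a) * triangle l + (3 - 2 * a) * triangle (-l) := by
    have h₁ := two_mul_triangle l
    have h₂ := two_mul_triangle (-l)
    zify [show 2 * a ≤ 3 by omega]
    rw [Int.toNat_of_nonneg (mul_add_nonneg_of_le_one ha l)]
    linear_combination (-(1 + a : ℤ)) * h₁ + (a - 1 : ℤ) * h₂
  calc _ = (-1) ^ triangle l * ((-1) ^ triangle (-l) *
        q ^ (2 * (l * (l + a)).toNat + triangle (-l))) := by
        rw [thetaTerm, neg_pow q]
        ring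
    _ = _ := by
        rw [exponent, thetaTerm, neg_pow (q ^ _), neg_pow (q ^ (3 - 2 * a)), ← pow_mul, ← pow_mul]
        ring

lemma isBaileyPair_qPochhammerInv (hq : ∀ n : ℕ, IsUnit (1 - q ^ (n + 1))) {a : ℕ} (ha : a ≤ 1) :
    IsBaileyPair q a (fun l => q ^ (l * (l + a)).toNat * thetaTerm (-1) (-q) l)
      (fun n => qPochhammerInv q n) := by
  convert (isBaileyPair_unit hq a).bailey_lemma hq ha with n
  rw [sum_eq_single_of_mem (n, 0) (by simp)]
  · simp
  · intro p hp hne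
    have : p.2 ≠ 0 := fun h => hne <| Prod.ext (by simpa [h] using hp) h
    rw [Pi.single_eq_of_ne this, mul_zero]

end Algebra

lemma prod_range_mul {M : Type*} [CommMonoid M] (f : ℕ → M) (m n : ℕ) :
    ∏ i ∈ range (m * n), f i = ∏ r ∈ range m, ∏ j ∈ range n, f (m * j + r) := by
  induction n with
  | zero => simp
  | succ n ih =>
    rw [Nat.mul_succ, prod_range_add, ih, ← prod_mul_distrib]
    simp only [prod_range_succ]

lemma tprod_eq_prod_tprod_mul_add {M : Type*} [CommMonoid M] [TopologicalSpace M]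
    [ContinuousMul M] [T2Space M] {f : ℕ → M} (hf : Multipliable f) {m : ℕ} (hm : m ≠ 0)
    (hf_residue : ∀ r < m, Multipliable fun j => f (m * j + r)) :
    ∏' i, f i = ∏ r ∈ range m, ∏' j, f (m * j + r) := by
  have left_limit := hf.hasProd.tendsto_prod_nat.comp
    (tendsto_id.const_mul_atTop' (Nat.pos_of_ne_zero hm))
  refine tendsto_nhds_unique left_limit <| (tendsto_finsetProd (range m) fun r hr =>
    (hf_residue r (mem_range.1 hr)).hasProd.tendsto_prod_nat).congr fun n => ?_
  exact (prod_range_mul f m n).symm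

lemma tendsto_mul_add_toNat (a : ℕ) :
    Tendsto (fun l : ℤ => (l * (l + a)).toNat) cofinite atTop := by
  refine tendsto_atTop.2 fun d => (Set.finite_Icc (-(d + a) : ℤ) d).subset fun l hl => ?_
  contrapose! hl
  obtain h | h : l < -(d + a) ∨ d < l := by
    rw [Set.mem_Icc] at hl
    omega
  all_goals
    simp only [Set.mem_compl_iff, Set.mem_ofPred_eq, not_not]
    zify
    refine le_trans ?_ (Int.self_le_toNat _)
    nlinarith

lemma tendsto_mul_add_cofinite (a : ℕ) : Tendsto (fun n : ℕ => n * (n + a)) cofinite atTop := by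
  rw [Nat.cofinite_eq_atTop]
  exact tendsto_atTop_mono (fun n => (Nat.le_mul_self n).trans
    (Nat.mul_le_mul_left n (Nat.le_add_right n a))) tendsto_id

lemma tendsto_triangle : Tendsto triangle cofinite atTop := by
  refine tendsto_atTop.2 fun d => ?_
  filter_upwards [(tendsto_mul_add_toNat 1).eventually_ge_atTop (2 * d)] with l hl
  rw [Nat.cast_one, ← two_mul_triangle] at hl
  omega

lemma tendsto_Icc_neg_natCast (a : ℕ) :
    Tendsto (fun n : ℕ => Icc (-(n + a : ℕ) : ℤ) n) atTop atTop := by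
  refine tendsto_atTop_finset_of_monotone (fun m n h => Icc_subset_Icc (by omega) (by omega))
    fun l => ⟨l.natAbs, ?_⟩
  rw [mem_Icc]
  omega

section PowerSeries

variable {R : Type*} [CommRing R] {q : R⟦X⟧}

lemma isUnit_one_sub_pow (hq : constantCoeff q = 0) (n : ℕ) : IsUnit (1 - q ^ (n + 1)) := by
  simp [isUnit_iff_constantCoeff, hq]

lemma tendsto_order_pow {ι : Type*} {u : Filter ι} (hq : constantCoeff q = 0)
    {e : ι → ℕ} (he : Tendsto e u atTop) : Tendsto (fun i => (q ^ e i).order) u (𝓝 ⊤) := by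
  refine ENat.tendsto_nhds_top_iff_natCast_lt.2 fun d => ?_
  filter_upwards [he.eventually_gt_atTop d] with i hi
  exact (Nat.cast_lt.2 hi).trans_le (le_order_pow_of_constantCoeff_eq_zero _ hq)

lemma tendsto_order_mul {ι : Type*} {u : Filter ι} {f : ι → R⟦X⟧}
    (hf : Tendsto (fun i => (f i).order) u (𝓝 ⊤)) (g : ι → R⟦X⟧) :
    Tendsto (fun i => (f i * g i).order) u (𝓝 ⊤) :=
  tendsto_nhds_top_mono' hf fun _ => le_self_add.trans (le_order_mul _ _)

lemma tendsto_order_thetaTerm {a b : R⟦X⟧} (hab : constantCoeff (a * b) = 0) :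
    Tendsto (fun l => (thetaTerm a b l).order) cofinite (𝓝 ⊤) := by
  have exponent_tendsto : Tendsto (fun l => min (triangle l) (triangle (-l))) cofinite atTop := by
    have tendsto_neg := tendsto_triangle.comp neg_injective.tendsto_cofinite
    refine tendsto_atTop.2 fun d => ?_
    filter_upwards [tendsto_triangle.eventually_ge_atTop d, tendsto_neg.eventually_ge_atTop d]
      with l h₁ h₂ using le_min h₁ h₂
  convert tendsto_order_mul (tendsto_order_pow hab exponent_tendsto) fun l =>
    a ^ (triangle l - min (triangle l) (triangle (-l))) *
      b ^ (triangle (-l) - min (triangle l) (triangle (-l))) using 3 with l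
  rw [mul_pow, mul_mul_mul_comm, pow_mul_pow_sub a (min_le_left _ _),
    pow_mul_pow_sub b (min_le_right _ _), thetaTerm]

variable [TopologicalSpace R]

lemma summable_of_tendsto_order {ι : Type*} {f : ι → R⟦X⟧}
    (hf : Tendsto (fun i => (f i).order) cofinite (𝓝 ⊤)) : Summable f := by
  refine (WithPiTopology.summable_iff_summable_coeff _).2 fun d =>
    summable_of_hasFiniteSupport ?_
  refine (ENat.tendsto_nhds_top_iff_natCast_lt.1 hf d).subset fun i hi => ?_
  contrapose! hi
  simpa using coeff_of_lt_order d (by simpa using hi)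

/-- The infinite `q`-Pochhammer symbol `(a; q)_∞`. -/
noncomputable def qPochhammerInf (a q : R⟦X⟧) : R⟦X⟧ := ∏' i, (1 - a * q ^ i)

lemma multipliable_qPochhammerInf (a : R⟦X⟧) (hq : constantCoeff q = 0) :
    Multipliable fun i => 1 - a * q ^ i := by
  have order_tendsto : Tendsto (fun i => (q ^ i * -a).order) atTop (𝓝 ⊤) :=
    tendsto_order_mul (tendsto_order_pow hq tendsto_id) _
  refine (WithPiTopology.multipliable_one_add_of_tendsto_order_atTop_nhds_top _
    order_tendsto).congr fun i => ?_
  ring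

lemma tendsto_qPochhammer (a : R⟦X⟧) (hq : constantCoeff q = 0) :
    Tendsto (qPochhammer a q) atTop (𝓝 (qPochhammerInf a q)) :=
  (multipliable_qPochhammerInf a hq).hasProd.tendsto_prod_nat

lemma multipliable_ite_one_sub_X_pow (p : ℕ → Prop) [DecidablePred p] :
    Multipliable fun i => if p (i + 1) then 1 - (X : R⟦X⟧) ^ (i + 1) else 1 := by
  have order_tendsto : Tendsto (fun i => (X ^ (i + 1) * if p (i + 1) then -(1 : R⟦X⟧) else 0).order)
      atTop (𝓝 ⊤) :=
    tendsto_order_mul (tendsto_order_pow (by simp) (tendsto_add_atTop_nat 1)) _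
  refine (WithPiTopology.multipliable_one_add_of_tendsto_order_atTop_nhds_top _
    order_tendsto).congr fun i => ?_
  split_ifs <;> ring

variable [T2Space R]

lemma isUnit_qPochhammerInf {a : R⟦X⟧} (ha : constantCoeff a = 0) (hq : constantCoeff q = 0) :
    IsUnit (qPochhammerInf a q) := by
  have constantCoeff_eq : constantCoeff (qPochhammerInf a q) = 1 := by
    rw [qPochhammerInf, (multipliable_qPochhammerInf a hq).map_tprod _
      (WithPiTopology.continuous_constantCoeff R)]
    simp [ha]
  rw [isUnit_iff_constantCoeff, constantCoeff_eq]
  exact isUnit_one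

variable [IsTopologicalRing R]

/-- Tannery's theorem, with the order in the role of the dominating series. -/
lemma tendsto_sum_mul_of_tendsto_order {ι : Type*} {f : ι → R⟦X⟧}
    (hf : Tendsto (fun i => (f i).order) cofinite (𝓝 ⊤)) {s : ℕ → Finset ι}
    (hs : Tendsto s atTop atTop) {c : ℕ → ι → R⟦X⟧} {b : R⟦X⟧}
    (hc : ∀ i, Tendsto (c · i) atTop (𝓝 b)) :
    Tendsto (fun n => ∑ i ∈ s n, f i * c n i) atTop (𝓝 ((∑' i, f i) * b)) := by
  refine (WithPiTopology.tendsto_iff_coeff_tendsto _ _ _ _).2 fun d => ?_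
  obtain ⟨t, ht⟩ : ∃ t : Finset ι, ∀ i ∉ t, d < (f i).order := by
    have hfin := ENat.tendsto_nhds_top_iff_natCast_lt.1 hf d
    exact ⟨hfin.toFinset, fun i hi => not_not.1 fun h => hi (hfin.mem_toFinset.2 h)⟩
  have vanish {i : ι} (hi : i ∉ t) (g : R⟦X⟧) : coeff d (f i * g) = 0 :=
    coeff_of_lt_order d ((ht i hi).trans_le (le_self_add.trans (le_order_mul _ _)))
  have coeff_limit : coeff d ((∑' i, f i) * b) = ∑ i ∈ t, coeff d (f i * b) := by
    have hsum := (summable_of_tendsto_order hf).hasSum.mul_right b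
    exact ((WithPiTopology.hasSum_iff_hasSum_coeff _).1 hsum d).unique
      (hasSum_sum_of_ne_finset_zero fun i hi => vanish hi b)
  rw [coeff_limit]
  refine (tendsto_finsetSum t fun i _ => ((WithPiTopology.continuous_coeff R d).tendsto _).comp
    ((hc i).const_mul (f i))).congr' ?_
  filter_upwards [hs.eventually_ge_atTop t] with n hn
  rw [map_sum]
  exact sum_subset hn fun i _ hi => vanish hi _

lemma tendsto_qPochhammerInv (hq : constantCoeff q = 0) :
    Tendsto (qPochhammerInv q) atTop (𝓝 (Ring.inverse (qPochhammerInf q q))) := by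
  -- The sequence converges because its differences `q ^ n / (q; q)_n` are summable.
  have telescope (n : ℕ) : q ^ (n + 1) * qPochhammerInv q (n + 1 : ℕ) =
      qPochhammerInv q (n + 1 : ℕ) - qPochhammerInv q n := by
    have := qPochhammerInv_sub_one (isUnit_one_sub_pow hq) (n + 1 : ℕ)
    rw [Int.toNat_natCast, Nat.cast_add_one, add_sub_cancel_right] at this
    rw [Nat.cast_add_one, this]
    ring
  have order_tendsto : Tendsto (fun n : ℕ => (q ^ (n + 1) * qPochhammerInv q (n + 1 : ℕ)).order)
      cofinite (𝓝 ⊤) := by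
    rw [Nat.cofinite_eq_atTop]
    exact tendsto_order_mul (tendsto_order_pow hq (tendsto_add_atTop_nat 1)) _
  have partial_sums := (summable_of_tendsto_order order_tendsto).hasSum.tendsto_sum_nat.add_const 1
  simp_rw [telescope, sum_range_sub (fun n : ℕ => qPochhammerInv q n), Nat.cast_zero,
    qPochhammerInv_zero, sub_add_cancel] at partial_sums
  have limit_eq := tendsto_nhds_unique (partial_sums.mul (tendsto_qPochhammer q hq)) <| by
    simp_rw [qPochhammerInv_mul_qPochhammer (isUnit_one_sub_pow hq)]
    exact tendsto_const_nhds
  rw [← Ring.eq_mul_inverse_iff_mul_eq _ _ _ (isUnit_qPochhammerInf hq hq), one_mul] at limit_eq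
  rwa [← Nat.map_cast_int_atTop, tendsto_map'_iff, ← limit_eq]

lemma tendsto_qPochhammerInv_natCast_add (hq : constantCoeff q = 0) (k : ℤ) :
    Tendsto (fun n : ℕ => qPochhammerInv q (n + k)) atTop
      (𝓝 (Ring.inverse (qPochhammerInf q q))) :=
  (tendsto_qPochhammerInv hq).comp
    (tendsto_atTop_add_const_right _ k tendsto_natCast_atTop_atTop)

lemma IsBaileyPair.tendsto (hq : constantCoeff q = 0) {a : ℕ} {α : ℤ → R⟦X⟧} {β : ℕ → R⟦X⟧}
    (h : IsBaileyPair q a α β) (hα : Tendsto (fun l => (α l).order) cofinite (𝓝 ⊤)) :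
    Tendsto β atTop (𝓝 ((∑' l, α l) * Ring.inverse (qPochhammerInf q q) ^ 2)) := by
  have weights (l : ℤ) : Tendsto
      (fun n : ℕ => qPochhammerInv q (n + a + l) * qPochhammerInv q (n - l)) atTop
      (𝓝 (Ring.inverse (qPochhammerInf q q) ^ 2)) := by
    simp_rw [sq, add_assoc, sub_eq_add_neg]
    exact (tendsto_qPochhammerInv_natCast_add hq _).mul (tendsto_qPochhammerInv_natCast_add hq _)
  rw [funext h]
  exact_mod_cast tendsto_sum_mul_of_tendsto_order hα (tendsto_Icc_neg_natCast a) weights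

theorem IsBaileyPair.qPochhammerInf_mul_tsum (hq : constantCoeff q = 0) {a : ℕ} (ha : a ≤ 1)
    {α : ℤ → R⟦X⟧} {β : ℕ → R⟦X⟧} (h : IsBaileyPair q a α β) :
    qPochhammerInf q q * ∑' n : ℕ, q ^ (n * (n + a)) * β n =
      ∑' l : ℤ, q ^ (l * (l + a)).toNat * α l := by
  have right_limit := (h.bailey_lemma (isUnit_one_sub_pow hq) ha).tendsto hq
    (tendsto_order_mul (tendsto_order_pow hq (tendsto_mul_add_toNat a)) α)
  have order_β : Tendsto (fun n : ℕ => (q ^ (n * (n + a)) * β n).order) cofinite (𝓝 ⊤) :=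
    tendsto_order_mul (tendsto_order_pow hq (tendsto_mul_add_cofinite a)) β
  have left_limit := tendsto_sum_mul_of_tendsto_order order_β
    (tendsto_finset_range.comp (tendsto_add_atTop_nat 1)) fun n =>
      tendsto_qPochhammerInv_natCast_add hq (-n)
  have limit_eq := tendsto_nhds_unique right_limit <| left_limit.congr fun N => by
    rw [← Nat.sum_antidiagonal_swap, Nat.sum_antidiagonal_eq_sum_range_succ_mk]
    refine sum_congr rfl fun n hn => ?_
    rw [Prod.fst_swap, Prod.snd_swap, Nat.cast_sub (mem_range_succ_iff.1 hn), ← sub_eq_add_neg]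
    ring
  have inverse_mul := Ring.inverse_mul_cancel _ (isUnit_qPochhammerInf hq hq)
  set φ := qPochhammerInf q q
  set S := ∑' n : ℕ, q ^ (n * (n + a)) * β n
  set T := ∑' l : ℤ, q ^ (l * (l + a)).toNat * α l
  linear_combination -φ ^ 2 * limit_eq + (T * (Ring.inverse φ * φ + 1) - φ * S) * inverse_mul

theorem jacobi_tripleProduct {a b : R⟦X⟧} (hab : constantCoeff (a * b) = 0) :
    ∑' l, thetaTerm a b l = qPochhammerInf (a * b) (a * b) *
      (qPochhammerInf (-a) (a * b) * qPochhammerInf (-b) (a * b)) := by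
  have left_limit := tendsto_sum_mul_of_tendsto_order (tendsto_order_thetaTerm hab)
    (tendsto_Icc_neg_natCast 0) fun l =>
      (tendsto_qPochhammerInv_natCast_add hab l).mul (tendsto_qPochhammerInv_natCast_add hab (-l))
  have double : Tendsto (fun n : ℕ => n + n) atTop atTop :=
    tendsto_atTop_mono (fun n => Nat.le_add_left n n) tendsto_id
  have right_limit :=
    ((tendsto_qPochhammerInv hab).comp (tendsto_natCast_atTop_atTop.comp double)).mul
      ((tendsto_qPochhammer (-a) hab).mul (tendsto_qPochhammer (-b) hab))
  have limit_eq := tendsto_nhds_unique left_limit <| right_limit.congr fun n =>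
    (finite_jacobi_tripleProduct a b (isUnit_one_sub_pow hab) n n).symm
  have inverse_mul := Ring.inverse_mul_cancel _ (isUnit_qPochhammerInf hab hab)
  set φ := qPochhammerInf (a * b) (a * b)
  set P := qPochhammerInf (-a) (a * b) * qPochhammerInf (-b) (a * b)
  linear_combination φ ^ 2 * limit_eq +
    (φ * P - (∑' l, thetaTerm a b l) * (Ring.inverse φ * φ + 1)) * inverse_mul

lemma mk_card_restricted_mul_tprod (p : ℕ → Prop) [DecidablePred p] :
    PowerSeries.mk (fun n => (#(Nat.Partition.restricted n p) : R)) *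
      ∏' i, (if p (i + 1) then 1 - (X : R⟦X⟧) ^ (i + 1) else 1) = 1 := by
  have euler := Nat.Partition.hasProd_powerSeriesMk_card_restricted R p
  rw [← euler.tprod_eq, ← euler.multipliable.tprod_mul (multipliable_ite_one_sub_X_pow p)]
  refine (tprod_congr fun i => ?_).trans tprod_one
  split_ifs
  · simp_rw [pow_mul]
    exact WithPiTopology.tsum_pow_mul_one_sub_of_constantCoeff_eq_zero (by simp)
  · exact mul_one 1

lemma qPochhammerInv_X (s : ℕ) : qPochhammerInv (X : R⟦X⟧) s =
    PowerSeries.mk fun n => (#(Nat.Partition.restricted n (· ≤ s)) : R) := by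
  have finite_product : ∏' i, (if i + 1 ≤ s then 1 - (X : R⟦X⟧) ^ (i + 1) else 1) =
      qPochhammer X X s := by
    rw [qPochhammer, tprod_eq_prod (s := range s) fun i hi => if_neg (by simpa using hi)]
    exact prod_congr rfl fun i hi => by rw [if_pos (Nat.succ_le_of_lt (mem_range.1 hi)), pow_succ']
  have h := mk_card_restricted_mul_tprod (R := R) (· ≤ s)
  rw [finite_product] at h
  exact left_inv_eq_right_inv (qPochhammerInv_mul_qPochhammer (isUnit_one_sub_pow (by simp)) s)
    (mul_comm _ _ |>.trans h)

lemma qPochhammerInf_eq_prod (a : R⟦X⟧) (hq : constantCoeff q = 0) {m : ℕ} (hm : m ≠ 0) :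
    qPochhammerInf a q = ∏ r ∈ range m, qPochhammerInf (a * q ^ r) (q ^ m) := by
  have factor (r j : ℕ) : 1 - a * q ^ (m * j + r) = 1 - a * q ^ r * (q ^ m) ^ j := by ring
  rw [qPochhammerInf, tprod_eq_prod_tprod_mul_add (multipliable_qPochhammerInf a hq) hm]
  all_goals simp only [factor, qPochhammerInf]
  exact fun r _ => multipliable_qPochhammerInf _ (by simp [hq, hm])

lemma mk_card_restricted_mul_prod_qPochhammerInf {p : ℕ → Prop} [DecidablePred p] {m : ℕ}
    (hm : m ≠ 0) (hp : Function.Periodic p m) :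
    PowerSeries.mk (fun n => (#(Nat.Partition.restricted n p) : R)) *
      ∏ r ∈ range m with p (r + 1), qPochhammerInf ((X : R⟦X⟧) ^ (r + 1)) (X ^ m) = 1 := by
  have factor (r j : ℕ) : (if p (m * j + r + 1) then 1 - (X : R⟦X⟧) ^ (m * j + r + 1) else 1) =
      if p (r + 1) then 1 - (X : R⟦X⟧) ^ (r + 1) * (X ^ m) ^ j else 1 := by
    have : p (m * j + r + 1) = p (r + 1) := by
      rw [add_assoc, add_comm, mul_comm]
      exact hp.nat_mul j (r + 1)
    simp only [this]
    ring_nf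
  rw [← mk_card_restricted_mul_tprod (R := R) p,
    tprod_eq_prod_tprod_mul_add (multipliable_ite_one_sub_X_pow p) hm, prod_filter]
  all_goals simp only [factor]
  · congr 1
    refine prod_congr rfl fun r _ => ?_
    split_ifs
    · rfl
    · exact tprod_one.symm
  · intro r _
    split_ifs
    · exact multipliable_qPochhammerInf _ (by simp [hm])
    · exact multipliable_one

theorem qPochhammerInf_mul_tsum_qPochhammerInv (hq : constantCoeff q = 0) {a : ℕ} (ha : a ≤ 1) :
    qPochhammerInf q q * ∑' n : ℕ, q ^ (n * (n + a)) * qPochhammerInv q n =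
      qPochhammerInf (q ^ 5) (q ^ 5) *
        (qPochhammerInf (q ^ (2 + 2 * a)) (q ^ 5) * qPochhammerInf (q ^ (3 - 2 * a)) (q ^ 5)) := by
  have ab : -q ^ (2 + 2 * a) * -q ^ (3 - 2 * a) = q ^ 5 := by
    rw [neg_mul_neg, ← pow_add]
    congr 1
    omega
  rw [(isBaileyPair_qPochhammerInv (isUnit_one_sub_pow hq) ha).qPochhammerInf_mul_tsum hq ha]
  simp_rw [pow_mul_thetaTerm_neg_one q ha]
  rw [jacobi_tripleProduct (by rw [ab]; simp [hq]), ab, neg_neg, neg_neg]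

theorem rogers_ramanujan {a : ℕ} (ha : a ≤ 1) :
    PowerSeries.mk (fun n =>
        (#(Nat.Partition.restricted n fun x => x % 5 = 1 + a ∨ x % 5 = 4 - a) : R)) =
      ∑' n : ℕ, X ^ (n * (n + a)) * qPochhammerInv X n := by
  have partitions := mk_card_restricted_mul_prod_qPochhammerInf (R := R) (m := 5) (by simp)
    (p := fun x => x % 5 = 1 + a ∨ x % 5 = 4 - a) (fun x => by simp)
  have residues : {r ∈ range 5 | (r + 1) % 5 = 1 + a ∨ (r + 1) % 5 = 4 - a} = {a, 3 - a} := by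
    interval_cases a <;> decide
  rw [residues, prod_pair (by omega)] at partitions
  have bailey := qPochhammerInf_mul_tsum_qPochhammerInv (R := R) (q := X) (by simp) ha
  have dissection := qPochhammerInf_eq_prod (X : R⟦X⟧) (q := X) (by simp) (m := 5) (by simp)
  simp only [← pow_succ', prod_range_succ, prod_range_zero, one_mul] at dissection
  apply (isUnit_qPochhammerInf (R := R) (q := X) (a := X) (by simp) (by simp)).mul_left_cancel
  rw [bailey, dissection]
  obtain rfl | rfl : a = 0 ∨ a = 1 := by omega
  all_goals norm_num only at partitions ⊢
  · linear_combination qPochhammerInf (X ^ 2) (X ^ 5) * qPochhammerInf (X ^ 3) (X ^ 5) *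
      qPochhammerInf ((X : R⟦X⟧) ^ 5) (X ^ 5) * partitions
  · linear_combination qPochhammerInf (X ^ 1) (X ^ 5) * qPochhammerInf (X ^ 4) (X ^ 5) *
      qPochhammerInf ((X : R⟦X⟧) ^ 5) (X ^ 5) * partitions

lemma tsum_sub_tsum_qPochhammerInv (hq : constantCoeff q = 0) :
    ∑' k : ℕ, q ^ (k * (k + 0)) * qPochhammerInv q k -
        ∑' k : ℕ, q ^ (k * (k + 1)) * qPochhammerInv q k =
      ∑' k : ℕ, q ^ (k ^ 2) * qPochhammerInv q (k - 1) := by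
  have hsum (a : ℕ) : Summable fun k : ℕ => q ^ (k * (k + a)) * qPochhammerInv q k :=
    summable_of_tendsto_order
      (tendsto_order_mul (tendsto_order_pow hq (tendsto_mul_add_cofinite a)) _)
  rw [← (hsum 0).tsum_sub (hsum 1)]
  refine tsum_congr fun k => ?_
  rw [qPochhammerInv_sub_one (isUnit_one_sub_pow hq), Int.toNat_natCast]
  ring

lemma coeff_tsum_qPochhammerInv_sub_one (n : ℕ) :
    coeff n (∑' k : ℕ, (X : R⟦X⟧) ^ (k ^ 2) * qPochhammerInv X (k - 1)) =
      ∑ k ∈ Icc 1 n with k ^ 2 ≤ n, (#(Nat.Partition.restricted (n - k ^ 2) (· ≤ k - 1)) : R) := by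
  have squares : Tendsto (fun k : ℕ => k ^ 2) cofinite atTop := by
    simpa only [add_zero, ← sq] using tendsto_mul_add_cofinite 0
  have hsum := (summable_of_tendsto_order (tendsto_order_mul (tendsto_order_pow
    (constantCoeff_X (R := R)) squares) fun k : ℕ => qPochhammerInv X (k - 1))).hasSum
  have term {k : ℕ} (hk : k ≠ 0) : qPochhammerInv (X : R⟦X⟧) (k - 1) =
      PowerSeries.mk fun n => (#(Nat.Partition.restricted n (· ≤ k - 1)) : R) := by
    rw [← qPochhammerInv_X, Nat.cast_pred (Nat.pos_of_ne_zero hk)]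
  rw [((WithPiTopology.hasSum_iff_hasSum_coeff _).1 hsum n).unique
    (hasSum_sum_of_ne_finset_zero (s := {k ∈ Icc 1 n | k ^ 2 ≤ n}) fun k hk => ?_)]
  · refine sum_congr rfl fun k hk => ?_
    obtain ⟨hk, hkn⟩ := mem_filter.1 hk
    rw [coeff_X_pow_mul', if_pos hkn, term (by grind), coeff_mk]
  · rw [coeff_X_pow_mul']
    split_ifs with hkn
    · obtain rfl : k = 0 := by
        have := Nat.le_self_pow two_ne_zero k
        grind
      rw [qPochhammerInv_of_neg X (by simp), map_zero]
    · rfl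

end PowerSeries

end RogersRamanujan

theorem rogers_ramanujan_difference_identity (n : ℕ) :
    ((Finset.univ.filter (fun p : Nat.Partition n =>
        ∀ x ∈ p.parts, x % 5 = 1 ∨ x % 5 = 4)).card : ℤ) -
    ((Finset.univ.filter (fun p : Nat.Partition n =>
        ∀ x ∈ p.parts, x % 5 = 2 ∨ x % 5 = 3)).card : ℤ) =
    ∑ k ∈ (Finset.Icc 1 n).filter (fun k => k ^ 2 ≤ n),
      ((Finset.univ.filter (fun p : Nat.Partition (n - k ^ 2) =>
          ∀ x ∈ p.parts, x ≤ k - 1)).card : ℤ) := by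
  have coeff_identity := congrArg (PowerSeries.coeff n) <|
    RogersRamanujan.tsum_sub_tsum_qPochhammerInv (q := PowerSeries.X (R := ℤ)) (by simp)
  rw [← RogersRamanujan.rogers_ramanujan zero_le_one, ← RogersRamanujan.rogers_ramanujan le_rfl,
    RogersRamanujan.coeff_tsum_qPochhammerInv_sub_one, map_sub, PowerSeries.coeff_mk,
    PowerSeries.coeff_mk] at coeff_identity
  exact coeff_identity
end
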